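/- arXiv:1912.02266 — 5 statements merged into one kernel-verified Lean document; each statement's English description precedes it below -/
import Mathlib

section
/- Let r ≥ 3 and let I ⊆ {2,…,r−1} be a set of nonconsecutive integers (any two distinct elements of I differ by at least 2). Let β ∈ ℕ^r be the vector whose i-th coordinate is 2 if i ∈ I and 1 otherwise (that is, β = Σ_{i=1}^r α_i + Σ_{i∈I} α_i in simple-root coordinates of type A_r). Then, as polynomials in ℤ[q], Σ_{k≥0} N_k(β)·q^k = q^{|I|+1}·(1+q)^{r−1−2|I|}·(2+2q+q²)^{|I|}. -/
open Polynomial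

/-- The positive roots of the Lie algebra of type `A_r` in simple-root coordinates:
the indicator vectors `α[i,j]` of the intervals `[i,j]` for `1 ≤ i ≤ j ≤ r`
(positions are `1`-based, so position `i` corresponds to `t : Fin r` with `t.val + 1 = i`). -/
def isPosRootA (r : ℕ) (v : Fin r → ℕ) : Prop :=
  ∃ i j : ℕ, 1 ≤ i ∧ i ≤ j ∧ j ≤ r ∧
    v = fun t => if i ≤ t.val + 1 ∧ t.val + 1 ≤ j then 1 else 0

/-- `NA r k ξ` is the number of decompositions of the weight `ξ` as a sum of exactly `k`
positive roots of `A_r`, i.e. the number of `ℕ`-valued functions (with finite support)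
on the set of positive roots whose values sum to `k` and whose weighted vector sum is `ξ`. -/
noncomputable def NA (r k : ℕ) (ξ : Fin r → ℕ) : ℕ :=
  Set.ncard {m : (Fin r → ℕ) →₀ ℕ |
    (∀ v ∈ m.support, isPosRootA r v) ∧
    (m.sum fun _ n => n) = k ∧
    (m.sum fun v n => n • v) = ξ}

/-- Number of pairs (intervals) in `D` that cover `t`. -/
def cov (D : Multiset (ℕ × ℕ)) (t : ℕ) : ℕ := D.countP (fun p => p.1 ≤ t ∧ t ≤ p.2)

/-- All pairs in `D` are intervals in `[1,n]`. -/
def Valid (n : ℕ) (D : Multiset (ℕ × ℕ)) : Prop := ∀ p ∈ D, 1 ≤ p.1 ∧ p.1 ≤ p.2 ∧ p.2 ≤ n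

/-- `(D, i)` encodes the decomposition `D + [i, n+1]` of `b` restricted to `[1,n+1]`. -/
def St (b : ℕ → ℕ) (n : ℕ) (x : Multiset (ℕ × ℕ) × ℕ) : Prop :=
  Valid n x.1 ∧ 1 ≤ x.2 ∧ x.2 ≤ n + 1 ∧
    ∀ t, 1 ≤ t → t ≤ n + 1 → cov x.1 t + (if x.2 ≤ t then 1 else 0) = b t

lemma cov_cons (p : ℕ × ℕ) (D : Multiset (ℕ × ℕ)) (t : ℕ) :
    cov (p ::ₘ D) t = cov D t + if p.1 ≤ t ∧ t ≤ p.2 then 1 else 0 := by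
  simp [cov, Multiset.countP_cons]

lemma cov_zero (t : ℕ) : cov 0 t = 0 := by simp [cov]

lemma valid_cons {n : ℕ} {p : ℕ × ℕ} {D : Multiset (ℕ × ℕ)} :
    Valid n (p ::ₘ D) ↔ (1 ≤ p.1 ∧ p.1 ≤ p.2 ∧ p.2 ≤ n) ∧ Valid n D := by
  simp [Valid]

lemma Valid.mono {n m : ℕ} (h : n ≤ m) {D : Multiset (ℕ × ℕ)} (hD : Valid n D) : Valid m D :=
  fun p hp => ⟨(hD p hp).1, (hD p hp).2.1, (hD p hp).2.2.trans h⟩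

lemma Valid.cov_eq_zero {n t : ℕ} (h : n < t) {D : Multiset (ℕ × ℕ)} (hD : Valid n D) :
    cov D t = 0 := by
  unfold cov
  rw [Multiset.countP_eq_zero]
  intro p hp
  have := hD p hp
  omega

lemma Valid.not_mem {n a t : ℕ} (h : n < t) {D : Multiset (ℕ × ℕ)} (hD : Valid n D) :
    (a, t) ∉ D := by
  intro hp
  have := hD _ hp
  simp at this
  omega

lemma Valid.shrink {n : ℕ} {D : Multiset (ℕ × ℕ)} (hD : Valid (n + 1) D)
    (h : cov D (n + 1) = 0) : Valid n D := by
  unfold cov at h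
  rw [Multiset.countP_eq_zero] at h
  intro p hp
  have := hD p hp
  have := h p hp
  omega

lemma Valid.peel {n c : ℕ} {D : Multiset (ℕ × ℕ)} (hD : Valid (n + 1) D)
    (h : cov D (n + 1) = c + 1) : ∃ a D', D = (a, n + 1) ::ₘ D' ∧ 1 ≤ a ∧ a ≤ n + 1 ∧
      Valid (n + 1) D' ∧ cov D' (n + 1) = c := by
  have h0 : 0 < D.countP (fun p => p.1 ≤ n + 1 ∧ n + 1 ≤ p.2) := by
    unfold cov at h; omega
  rw [Multiset.countP_pos] at h0
  obtain ⟨⟨a, e⟩, hp, hp2⟩ := h0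
  have hv := hD _ hp
  simp only at hp2 hv
  obtain rfl : e = n + 1 := by omega
  obtain ⟨D', rfl⟩ := Multiset.exists_cons_of_mem hp
  refine ⟨a, D', rfl, hv.1, hv.2.1, (valid_cons.1 hD).2, ?_⟩
  rw [cov_cons] at h
  simp only [hv.2.1, le_refl, and_self, if_true] at h
  omega

lemma cons_inj {n a a' t : ℕ} (h : n < t) {D D' : Multiset (ℕ × ℕ)} (hD : Valid n D)
    (he : (a, t) ::ₘ D = (a', t) ::ₘ D') : a = a' ∧ D = D' := by
  rw [Multiset.cons_eq_cons] at he
  rcases he with ⟨h1, h2⟩ | ⟨h1, cs, h2, h3⟩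
  · simp at h1; exact ⟨h1, h2⟩
  · exact absurd (h2 ▸ Multiset.mem_cons_self _ _) (hD.not_mem (a := a') h)

open Classical in
/-- `F` enumerates the states with generating function `P`. -/
def GF (b : ℕ → ℕ) (n : ℕ) (P : ℤ[X]) : Prop :=
  ∃ F : Finset (Multiset (ℕ × ℕ) × ℕ), (∀ x, x ∈ F ↔ St b n x) ∧
    ∑ x ∈ F, (X : ℤ[X]) ^ (Multiset.card x.1) = P

lemma gf_zero (b : ℕ → ℕ) (hb : b 1 = 1) : GF b 0 1 := by
  refine ⟨{(0, 1)}, ?_, by simp⟩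
  rintro ⟨D, i⟩
  simp only [Finset.mem_singleton, Prod.mk.injEq]
  constructor
  · rintro ⟨rfl, rfl⟩
    refine ⟨by simp [Valid], le_rfl, by simp, ?_⟩
    intro t h1 h2
    obtain rfl : t = 1 := by simp at h2; omega
    simp [cov_zero, hb]
  · rintro ⟨h1, h2, h3, -⟩
    simp only at h1 h2 h3
    refine ⟨?_, by omega⟩
    rw [Multiset.eq_zero_iff_forall_notMem]
    intro p hp
    have := h1 p hp
    omega

open Classical in
lemma gf_step1 (b : ℕ → ℕ) (n : ℕ) (P : ℤ[X]) (hb1 : b (n + 1) = 1) (hb2 : b (n + 2) = 1)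
    (h : GF b n P) : GF b (n + 1) (P * (1 + X)) := by
  obtain ⟨F, hF, hP⟩ := h
  let f2 : Multiset (ℕ × ℕ) × ℕ → Multiset (ℕ × ℕ) × ℕ := fun x =>
    ((x.2, n + 1) ::ₘ x.1, n + 2)
  have i2 : Set.InjOn f2 F := by
    rintro ⟨D, i⟩ hx ⟨D', i'⟩ hx' he
    simp only [f2, Prod.mk.injEq, and_true] at he
    have := cons_inj (Nat.lt_succ_self n) ((hF _).1 hx).1 he
    exact Prod.ext this.2 this.1
  have d : Disjoint F (F.image f2) := by
    rw [Finset.disjoint_left]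
    rintro x hx hx'
    obtain ⟨y, hy, rfl⟩ := Finset.mem_image.1 hx'
    have := ((hF _).1 hx).2.2.1
    simp [f2] at this
  refine ⟨F ∪ F.image f2, ?_, ?_⟩
  · rintro ⟨D, i⟩
    simp only [Finset.mem_union, Finset.mem_image, hF]
    constructor
    · rintro (⟨h1, h2, h3, h4⟩ | ⟨⟨D', i'⟩, ⟨h1, h2, h3, h4⟩, he⟩)
      · simp only at h1 h2 h3 h4
        refine ⟨h1.mono (by omega), h2, by simp only; omega, ?_⟩
        intro t ht1 ht2
        simp only
        by_cases ht : t = n + 2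
        · subst ht
          rw [h1.cov_eq_zero (by omega), if_pos (by omega), hb2]
        · exact h4 t ht1 (by omega)
      · simp only [f2, Prod.mk.injEq] at h1 h2 h3 h4 he
        obtain ⟨rfl, rfl⟩ := he
        refine ⟨valid_cons.2 ⟨⟨h2, h3, le_rfl⟩, h1.mono (by omega)⟩, by simp, by simp, ?_⟩
        intro t ht1 ht2
        simp only [cov_cons]
        by_cases ht : t = n + 2
        · subst ht
          rw [h1.cov_eq_zero (by omega)]
          simp [hb2]
        · have := h4 t ht1 (by omega)
          split_ifs at this ⊢ <;> omega
    · rintro ⟨h1, h2, h3, h4⟩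
      simp only at h1 h2 h3 h4
      have e1 := h4 (n + 1) (by omega) (by omega)
      rw [hb1] at e1
      by_cases hi : i = n + 2
      · right
        subst hi
        rw [if_neg (by omega)] at e1
        obtain ⟨a, D', rfl, ha1, ha2, hv, hc⟩ := h1.peel (c := 0) (by omega)
        refine ⟨(D', a), ⟨hv.shrink hc, ha1, ha2, ?_⟩, rfl⟩
        intro t ht1 ht2
        have := h4 t ht1 (by omega)
        simp only [cov_cons] at this ⊢
        split_ifs at this ⊢ <;> omega
      · left
        rw [if_pos (by omega)] at e1
        exact ⟨h1.shrink (by omega), h2, by simp only; omega, fun t ht1 ht2 => h4 t ht1 (by omega)⟩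
  · rw [Finset.sum_union d, Finset.sum_image i2, ← hP, mul_add, mul_one, Finset.sum_mul]
    simp [f2, pow_succ]

open Classical in
lemma gf_step2 (b : ℕ → ℕ) (n : ℕ) (P : ℤ[X]) (hb1 : b (n + 1) = 1) (hb2 : b (n + 2) = 2)
    (hb3 : b (n + 3) = 1)
    (h : GF b n P) : GF b (n + 2) (P * (X * (2 + 2 * X + X ^ 2))) := by
  obtain ⟨F, hF, hP⟩ := h
  let f1 : Multiset (ℕ × ℕ) × ℕ → Multiset (ℕ × ℕ) × ℕ := fun x =>
    ((n + 2, n + 2) ::ₘ x.1, x.2)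
  let f2 : Multiset (ℕ × ℕ) × ℕ → Multiset (ℕ × ℕ) × ℕ := fun x =>
    ((x.2, n + 2) ::ₘ x.1, n + 2)
  let f3 : Multiset (ℕ × ℕ) × ℕ → Multiset (ℕ × ℕ) × ℕ := fun x =>
    ((n + 2, n + 2) ::ₘ (x.2, n + 2) ::ₘ x.1, n + 3)
  let f4 : Multiset (ℕ × ℕ) × ℕ → Multiset (ℕ × ℕ) × ℕ := fun x =>
    ((n + 2, n + 2) ::ₘ (x.2, n + 1) ::ₘ x.1, n + 2)
  let f5 : Multiset (ℕ × ℕ) × ℕ → Multiset (ℕ × ℕ) × ℕ := fun x =>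
    ((n + 2, n + 2) ::ₘ (n + 2, n + 2) ::ₘ (x.2, n + 1) ::ₘ x.1, n + 3)
  have i1 : Set.InjOn f1 F := by
    rintro ⟨D, i⟩ hx ⟨D', i'⟩ hx' he
    simpa [f1] using he
  have i2 : Set.InjOn f2 F := by
    rintro ⟨D, i⟩ hx ⟨D', i'⟩ hx' he
    simp only [f2, Prod.mk.injEq, and_true] at he
    have := cons_inj (show n < n + 2 by omega) ((hF _).1 hx).1 he
    exact Prod.ext this.2 this.1
  have i3 : Set.InjOn f3 F := by
    rintro ⟨D, i⟩ hx ⟨D', i'⟩ hx' he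
    simp only [f3, Prod.mk.injEq, and_true, Multiset.cons_inj_right] at he
    have := cons_inj (show n < n + 2 by omega) ((hF _).1 hx).1 he
    exact Prod.ext this.2 this.1
  have i4 : Set.InjOn f4 F := by
    rintro ⟨D, i⟩ hx ⟨D', i'⟩ hx' he
    simp only [f4, Prod.mk.injEq, and_true, Multiset.cons_inj_right] at he
    have := cons_inj (show n < n + 1 by omega) ((hF _).1 hx).1 he
    exact Prod.ext this.2 this.1
  have i5 : Set.InjOn f5 F := by
    rintro ⟨D, i⟩ hx ⟨D', i'⟩ hx' he
    simp only [f5, Prod.mk.injEq, and_true, Multiset.cons_inj_right] at he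
    have := cons_inj (show n < n + 1 by omega) ((hF _).1 hx).1 he
    exact Prod.ext this.2 this.1
  have hle : ∀ x ∈ F, x.2 ≤ n + 1 := fun x hx => ((hF _).1 hx).2.2.1
  have d24 : Disjoint (F.image f2) (F.image f4) := by
    rw [Finset.disjoint_left]
    rintro x hx hx'
    obtain ⟨y, hy, rfl⟩ := Finset.mem_image.1 hx
    obtain ⟨z, hz, he⟩ := Finset.mem_image.1 hx'
    simp only [f2, f4, Prod.mk.injEq, and_true] at he
    have := cons_inj (show n + 1 < n + 2 by omega) (valid_cons.2 ⟨⟨((hF _).1 hz).2.1, hle z hz,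
      le_rfl⟩, ((hF _).1 hz).1.mono (by omega)⟩) he
    have := hle y hy
    omega
  have d35 : Disjoint (F.image f3) (F.image f5) := by
    rw [Finset.disjoint_left]
    rintro x hx hx'
    obtain ⟨y, hy, rfl⟩ := Finset.mem_image.1 hx
    obtain ⟨z, hz, he⟩ := Finset.mem_image.1 hx'
    simp only [f3, f5, Prod.mk.injEq, and_true, Multiset.cons_inj_right] at he
    have := cons_inj (show n + 1 < n + 2 by omega) (valid_cons.2 ⟨⟨((hF _).1 hz).2.1, hle z hz,
      le_rfl⟩, ((hF _).1 hz).1.mono (by omega)⟩) he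
    have := hle y hy
    omega
  have d2435 : Disjoint (F.image f2 ∪ F.image f4) (F.image f3 ∪ F.image f5) := by
    rw [Finset.disjoint_left]
    intro x hx hx'
    have e1 : x.2 = n + 2 := by
      simp only [Finset.mem_union, Finset.mem_image] at hx
      rcases hx with ⟨y, -, rfl⟩ | ⟨y, -, rfl⟩ <;> rfl
    have e2 : x.2 = n + 3 := by
      simp only [Finset.mem_union, Finset.mem_image] at hx'
      rcases hx' with ⟨y, -, rfl⟩ | ⟨y, -, rfl⟩ <;> rfl
    omega
  have d1 : Disjoint (F.image f1) ((F.image f2 ∪ F.image f4) ∪ (F.image f3 ∪ F.image f5)) := by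
    rw [Finset.disjoint_left]
    intro x hx hx'
    have e1 : x.2 ≤ n + 1 := by
      simp only [Finset.mem_image] at hx
      rcases hx with ⟨y, hy, rfl⟩
      exact hle y hy
    have e2 : n + 2 ≤ x.2 := by
      simp only [Finset.mem_union, Finset.mem_image] at hx'
      rcases hx' with (⟨y, -, rfl⟩ | ⟨y, -, rfl⟩) | (⟨y, -, rfl⟩ | ⟨y, -, rfl⟩) <;>
        simp [f2, f3, f4, f5]
    omega
  refine ⟨F.image f1 ∪ ((F.image f2 ∪ F.image f4) ∪ (F.image f3 ∪ F.image f5)), ?_, ?_⟩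
  · rintro ⟨D, i⟩
    constructor
    · intro hx
      have key : ∃ y, St b n y ∧ (f1 y = (D, i) ∨ f2 y = (D, i) ∨ f3 y = (D, i) ∨ f4 y = (D, i) ∨
          f5 y = (D, i)) := by
        simp only [Finset.mem_union, Finset.mem_image, hF] at hx
        rcases hx with ⟨y, hy, h⟩ | (⟨y, hy, h⟩ | ⟨y, hy, h⟩) | (⟨y, hy, h⟩ | ⟨y, hy, h⟩) <;>
          exact ⟨y, hy, by tauto⟩
      obtain ⟨⟨D', i'⟩, ⟨h1, h2, h3, h4⟩, he⟩ := key
      simp only [f1, f2, f3, f4, f5, Prod.mk.injEq] at h1 h2 h3 h4 he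
      have hv := h1.mono (show n ≤ n + 2 by omega)
      have z1 := h1.cov_eq_zero (show n < n + 1 by omega)
      have z2 := h1.cov_eq_zero (show n < n + 2 by omega)
      have z3 := h1.cov_eq_zero (show n < n + 3 by omega)
      rcases he with ⟨rfl, rfl⟩ | ⟨rfl, rfl⟩ | ⟨rfl, rfl⟩ | ⟨rfl, rfl⟩ | ⟨rfl, rfl⟩ <;>
      · refine ⟨?_, by simp only; omega, by simp only; omega, ?_⟩
        · simp only [valid_cons, hv, and_true]
          omega
        · intro t ht1 ht2
          simp only [cov_cons]
          by_cases ht : t = n + 3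
          · subst ht
            rw [z3, hb3]
            split_ifs <;> omega
          by_cases ht : t = n + 2
          · subst ht
            rw [z2, hb2]
            split_ifs <;> omega
          · have := h4 t ht1 (by omega)
            split_ifs at this ⊢ <;> omega
    · rintro ⟨h1, h2, h3, h4⟩
      simp only at h1 h2 h3 h4
      have e1 := h4 (n + 1) (by omega) (by omega)
      have e2 := h4 (n + 2) (by omega) (by omega)
      rw [hb1] at e1
      rw [hb2] at e2
      suffices key : ∃ y, St b n y ∧ (f1 y = (D, i) ∨ f2 y = (D, i) ∨ f3 y = (D, i) ∨
          f4 y = (D, i) ∨ f5 y = (D, i)) by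
        simp only [Finset.mem_union, Finset.mem_image, hF]
        obtain ⟨y, hy, h | h | h | h | h⟩ := key
        · exact Or.inl ⟨y, hy, h⟩
        · exact Or.inr (Or.inl (Or.inl ⟨y, hy, h⟩))
        · exact Or.inr (Or.inr (Or.inl ⟨y, hy, h⟩))
        · exact Or.inr (Or.inl (Or.inr ⟨y, hy, h⟩))
        · exact Or.inr (Or.inr (Or.inr ⟨y, hy, h⟩))
      by_cases hi3 : i = n + 3
      · subst hi3
        rw [if_neg (by omega)] at e1 e2
        obtain ⟨a, D, rfl, ha1, ha2, hv0, hc0⟩ := h1.peel (c := 1) (by omega)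
        obtain ⟨a', D, rfl, ha1', ha2', hv1, hc1⟩ := hv0.peel (c := 0) (by omega)
        have hv := hv1.shrink hc1
        clear hv0 hc0 hv1 hc1
        simp only [cov_cons] at e1
        by_cases haa : a = n + 2
        · subst haa
          by_cases haa' : a' = n + 2
          · subst haa'
            replace e1 : cov D (n + 1) = 1 := by split_ifs at e1 <;> omega
            obtain ⟨j, D, rfl, hj1, hj2, hv, hc⟩ := hv.peel (c := 0) (by omega)
            refine ⟨(D, j), ⟨hv.shrink hc, hj1, hj2, ?_⟩, by simp [f5]⟩
            intro t ht1 ht2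
            have := h4 t ht1 (by omega)
            simp only [cov_cons] at this ⊢
            split_ifs at this ⊢ <;> omega
          · replace e1 : cov D (n + 1) = 0 := by split_ifs at e1 <;> omega
            refine ⟨(D, a'), ⟨hv.shrink (by omega), ha1', by simp only; omega, ?_⟩, by simp [f3]⟩
            intro t ht1 ht2
            have := h4 t ht1 (by omega)
            simp only [cov_cons] at this ⊢
            split_ifs at this ⊢ <;> omega
        · have haa' : a' = n + 2 := by
            by_contra hne
            split_ifs at e1 <;> omega
          subst haa'
          replace e1 : cov D (n + 1) = 0 := by split_ifs at e1 <;> omega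
          refine ⟨(D, a), ⟨hv.shrink (by omega), ha1, by simp only; omega, ?_⟩,
            by simp [f3, Multiset.cons_swap]⟩
          intro t ht1 ht2
          have := h4 t ht1 (by omega)
          simp only [cov_cons] at this ⊢
          split_ifs at this ⊢ <;> omega
      · rw [if_pos (show i ≤ n + 2 by omega)] at e2
        obtain ⟨a, D, rfl, ha1, ha2, hv, hc⟩ := h1.peel (c := 0) (show cov D (n + 2) = 0 + 1 by omega)
        have hv := hv.shrink hc
        simp only [cov_cons] at e1
        by_cases hi2 : i = n + 2
        · subst hi2
          by_cases haa : a = n + 2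
          · subst haa
            replace e1 : cov D (n + 1) = 1 := by split_ifs at e1 <;> omega
            obtain ⟨j, D, rfl, hj1, hj2, hv, hc⟩ := hv.peel (c := 0) (by omega)
            refine ⟨(D, j), ⟨hv.shrink hc, hj1, hj2, ?_⟩, by simp [f4]⟩
            intro t ht1 ht2
            have := h4 t ht1 (by omega)
            simp only [cov_cons] at this ⊢
            split_ifs at this ⊢ <;> omega
          · replace e1 : cov D (n + 1) = 0 := by split_ifs at e1 <;> omega
            refine ⟨(D, a), ⟨hv.shrink (by omega), ha1, by simp only; omega, ?_⟩, by simp [f2]⟩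
            intro t ht1 ht2
            have := h4 t ht1 (by omega)
            simp only [cov_cons] at this ⊢
            split_ifs at this ⊢ <;> omega
        · have haa : a = n + 2 := by
            by_contra hne
            split_ifs at e1 <;> omega
          subst haa
          replace e1 : cov D (n + 1) = 0 := by split_ifs at e1 <;> omega
          refine ⟨(D, i), ⟨hv.shrink (by omega), h2, by simp only; omega, ?_⟩, by simp [f1]⟩
          intro t ht1 ht2
          have := h4 t ht1 (by omega)
          simp only [cov_cons] at this ⊢
          split_ifs at this ⊢ <;> omega
  · rw [Finset.sum_union d1, Finset.sum_union d2435, Finset.sum_union d24, Finset.sum_union d35,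
      Finset.sum_image i1, Finset.sum_image i2, Finset.sum_image i3, Finset.sum_image i4,
      Finset.sum_image i5, ← hP, Finset.sum_mul]
    simp only [← Finset.sum_add_distrib]
    refine Finset.sum_congr rfl fun x _ => ?_
    simp only [f1, f2, f3, f4, f5, Multiset.card_cons]
    ring

lemma gf_main (I : Finset ℕ) (hI : ∀ i ∈ I, 2 ≤ i)
    (hnc : ∀ i ∈ I, ∀ j ∈ I, i < j → i + 2 ≤ j) (n : ℕ) : n + 1 ∉ I →
    ∃ d, n = 2 * (I.filter (· ≤ n)).card + d ∧
    GF (fun t => if t ∈ I then 2 else 1) n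
      (X ^ (I.filter (· ≤ n)).card * (1 + X) ^ d *
        (2 + 2 * X + X ^ 2) ^ (I.filter (· ≤ n)).card) := by
  induction n using Nat.strong_induction_on with
  | _ n ih =>
  intro hn
  rcases n with _ | n
  · have : I.filter (· ≤ 0) = ∅ := by
      rw [Finset.filter_eq_empty_iff]
      intro i hi
      have := hI i hi
      omega
    refine ⟨0, by rw [this]; rfl, ?_⟩
    simp only [this]
    simpa using gf_zero (fun t => if t ∈ I then 2 else 1) (by simpa using hn)
  by_cases h1 : n + 1 ∈ I
  · rcases n with _ | n
    · have := hI _ h1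
      omega
    have h0 : n + 1 ∉ I := fun h => by have := hnc _ h _ h1 (by omega); omega
    obtain ⟨d, hd, hg⟩ := ih n (by omega) h0
    have hf : I.filter (· ≤ n + 1 + 1) = insert (n + 2) (I.filter (· ≤ n)) := by
      ext x
      simp only [Finset.mem_filter, Finset.mem_insert]
      constructor
      · rintro ⟨hx, hx2⟩
        by_cases x = n + 2
        · tauto
        · by_cases hx1 : x = n + 1
          · subst hx1; tauto
          · right; exact ⟨hx, by omega⟩
      · rintro (rfl | ⟨hx, hx2⟩)
        · exact ⟨h1, le_rfl⟩
        · exact ⟨hx, by omega⟩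
    rw [hf, Finset.card_insert_of_notMem (by simp)]
    refine ⟨d, by omega, ?_⟩
    have := gf_step2 _ n _ (by simp [h0]) (by simp [h1]) (by simp [hn]) hg
    convert this using 1
    ring
  · obtain ⟨d, hd, hg⟩ := ih n (by omega) h1
    have hf : I.filter (· ≤ n + 1) = I.filter (· ≤ n) := by
      ext x
      simp only [Finset.mem_filter]
      constructor
      · rintro ⟨hx, hx2⟩
        refine ⟨hx, ?_⟩
        by_contra hc
        obtain rfl : x = n + 1 := by omega
        exact h1 hx
      · rintro ⟨hx, hx2⟩
        exact ⟨hx, by omega⟩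
    rw [hf]
    refine ⟨d + 1, by omega, ?_⟩
    have := gf_step1 _ n _ (by simp [h1]) (by simp [hn]) hg
    convert this using 1
    ring

/-- The root attached to a pair. -/
def rootOf (r : ℕ) (p : ℕ × ℕ) : Fin r → ℕ :=
  fun t => if p.1 ≤ t.val + 1 ∧ t.val + 1 ≤ p.2 then 1 else 0

lemma rootOf_inj {r : ℕ} {p q : ℕ × ℕ} (hp : 1 ≤ p.1 ∧ p.1 ≤ p.2 ∧ p.2 ≤ r)
    (hq : 1 ≤ q.1 ∧ q.1 ≤ q.2 ∧ q.2 ≤ r) (h : rootOf r p = rootOf r q) : p = q := by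
  have key : ∀ t, 1 ≤ t → t ≤ r → ((p.1 ≤ t ∧ t ≤ p.2) ↔ (q.1 ≤ t ∧ t ≤ q.2)) := by
    intro t h1 h2
    have := congrFun h ⟨t - 1, by omega⟩
    simp only [rootOf, Nat.sub_add_cancel h1] at this
    split_ifs at this <;> tauto
  have a := key p.1 (by omega) (by omega)
  have b := key p.2 (by omega) (by omega)
  have c := key q.1 (by omega) (by omega)
  have d := key q.2 (by omega) (by omega)
  ext <;> omega

lemma sum_rootOf (r : ℕ) (M : Multiset (ℕ × ℕ)) (t : Fin r) :
    (M.map (rootOf r)).sum t = cov M (t.val + 1) := by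
  induction M using Multiset.induction_on with
  | empty => simp [cov_zero]
  | cons p M ih => rw [Multiset.map_cons, Multiset.sum_cons, Pi.add_apply, ih, cov_cons, rootOf,
      add_comm]

lemma exists_inv (r : ℕ) : ∃ g : (Fin r → ℕ) → ℕ × ℕ,
    (∀ v, isPosRootA r v → (1 ≤ (g v).1 ∧ (g v).1 ≤ (g v).2 ∧ (g v).2 ≤ r) ∧
      rootOf r (g v) = v) := by
  have : ∀ v, ∃ p : ℕ × ℕ, isPosRootA r v → (1 ≤ p.1 ∧ p.1 ≤ p.2 ∧ p.2 ≤ r) ∧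
      rootOf r p = v := by
    intro v
    by_cases h : isPosRootA r v
    · obtain ⟨i, j, h1, h2, h3, rfl⟩ := h
      exact ⟨(i, j), fun _ => ⟨⟨h1, h2, h3⟩, rfl⟩⟩
    · exact ⟨(0, 0), fun h' => absurd h' h⟩
  choose g hg using this
  exact ⟨g, hg⟩

lemma finsupp_sum_eq {r : ℕ} (m : (Fin r → ℕ) →₀ ℕ) :
    (m.sum fun v n => n • v) = (Finsupp.toMultiset m).sum := by
  rw [Finsupp.toMultiset_apply, Finsupp.sum, Finsupp.sum, Multiset.sum_sum]
  simp [Multiset.sum_nsmul]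

open Classical in
lemma NA_eq (n k : ℕ) (b : ℕ → ℕ) (hb : b (n + 1) = 1) (P : ℤ[X]) (h : GF b n P) :
    (NA (n + 1) k (fun t => b (t.val + 1)) : ℤ) = (X * P).coeff k := by
  obtain ⟨F, hF, hP⟩ := h
  obtain ⟨g, hg⟩ := exists_inv (n + 1)
  let φ : Multiset (ℕ × ℕ) × ℕ → ((Fin (n + 1) → ℕ) →₀ ℕ) := fun x =>
    Multiset.toFinsupp (((x.2, n + 1) ::ₘ x.1).map (rootOf (n + 1)))
  have hval : ∀ x, St b n x → Valid (n + 1) ((x.2, n + 1) ::ₘ x.1) := fun x hx =>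
    valid_cons.2 ⟨⟨hx.2.1, hx.2.2.1, le_rfl⟩, hx.1.mono (by omega)⟩
  have hroot : ∀ p : ℕ × ℕ, (1 ≤ p.1 ∧ p.1 ≤ p.2 ∧ p.2 ≤ n + 1) →
      isPosRootA (n + 1) (rootOf (n + 1) p) := fun p hp => ⟨p.1, p.2, hp.1, hp.2.1, hp.2.2, rfl⟩
  have hgr : ∀ p : ℕ × ℕ, (1 ≤ p.1 ∧ p.1 ≤ p.2 ∧ p.2 ≤ n + 1) →
      g (rootOf (n + 1) p) = p := fun p hp =>
    rootOf_inj (hg _ (hroot p hp)).1 hp (hg _ (hroot p hp)).2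
  have hback : ∀ M, Valid (n + 1) M → (M.map (rootOf (n + 1))).map g = M := by
    intro M hM
    rw [Multiset.map_map]
    conv_rhs => rw [← Multiset.map_id M]
    exact Multiset.map_congr rfl fun p hp => hgr p (hM p hp)
  have hinj : Set.InjOn φ F := by
    intro x hx y hy he
    have he := Multiset.toFinsupp.injective he
    have hx := (hF x).1 hx
    have hy := (hF y).1 hy
    have he2 := congrArg (Multiset.map g) he
    rw [hback _ (hval x hx), hback _ (hval y hy)] at he2
    have := cons_inj (Nat.lt_succ_self n) hx.1 he2
    exact Prod.ext this.2 this.1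
  have hset : {m : (Fin (n + 1) → ℕ) →₀ ℕ |
      (∀ v ∈ m.support, isPosRootA (n + 1) v) ∧
      (m.sum fun _ n => n) = k ∧
      (m.sum fun v n => n • v) = (fun t => b (t.val + 1))} =
      φ '' ↑(F.filter (fun x => Multiset.card x.1 + 1 = k)) := by
    ext m
    have hm : Multiset.toFinsupp (Finsupp.toMultiset m) = m := by simp
    rw [Set.mem_ofPred_eq, finsupp_sum_eq]
    have hc : (m.sum fun _ n => n) = Multiset.card (Finsupp.toMultiset m) := by
      rw [Finsupp.card_toMultiset]; rfl
    have hs : (∀ v ∈ m.support, isPosRootA (n + 1) v) ↔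
        ∀ v ∈ Finsupp.toMultiset m, isPosRootA (n + 1) v := by
      simp only [Finsupp.mem_toMultiset]
    rw [hc, hs]
    generalize Finsupp.toMultiset m = M at hm
    subst hm
    simp only [Set.mem_image, Finset.coe_filter, Set.mem_ofPred_eq, hF]
    constructor
    · rintro ⟨h1, h2, h3⟩
      have hM : (M.map g).map (rootOf (n + 1)) = M := by
        rw [Multiset.map_map]
        conv_rhs => rw [← Multiset.map_id M]
        exact Multiset.map_congr rfl fun p hp => (hg p (h1 p hp)).2
      have hV : Valid (n + 1) (M.map g) := by
        intro p hp
        obtain ⟨v, hv, rfl⟩ := Multiset.mem_map.1 hp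
        exact (hg v (h1 v hv)).1
      have hcov : ∀ t, 1 ≤ t → t ≤ n + 1 → cov (M.map g) t = b t := by
        intro t ht1 ht2
        have := sum_rootOf (n + 1) (M.map g) ⟨t - 1, by omega⟩
        rw [hM, h3] at this
        simp only [Nat.sub_add_cancel ht1] at this
        exact this.symm
      obtain ⟨a, D, hD, ha1, ha2, hv, hc⟩ := hV.peel (c := 0)
        (by rw [hcov _ (by omega) le_rfl, hb])
      refine ⟨(D, a), ⟨⟨hv.shrink hc, ha1, ha2, ?_⟩, ?_⟩, ?_⟩
      · intro t ht1 ht2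
        have := hcov t ht1 ht2
        rw [hD, cov_cons] at this
        simp only at this ⊢
        split_ifs at this ⊢ <;> omega
      · rw [← h2, ← Multiset.card_map g M, hD, Multiset.card_cons]
      · simp only [φ]
        rw [← hD, hM]
    · rintro ⟨x, ⟨hx, hk⟩, he⟩
      have he := Multiset.toFinsupp.injective he
      subst he
      refine ⟨?_, ?_, ?_⟩
      · intro v hv
        obtain ⟨p, hp, rfl⟩ := Multiset.mem_map.1 hv
        exact hroot p (hval x hx p hp)
      · rw [Multiset.card_map, Multiset.card_cons, hk]
      · funext t
        rw [sum_rootOf, cov_cons, ← hx.2.2.2 (t.val + 1) (by omega) (by omega)]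
        have := t.isLt
        simp only
        split_ifs <;> omega
  unfold NA
  rw [hset, Set.InjOn.ncard_image (hinj.mono (Finset.coe_subset.2 (Finset.filter_subset _ _))), Set.ncard_coe_finset, ← hP,
    Finset.mul_sum, Polynomial.finsetSum_coeff, Finset.card_filter]
  push_cast
  refine Finset.sum_congr rfl fun x _ => ?_
  rw [← pow_succ', Polynomial.coeff_X_pow]
  simp only [eq_comm]

/-- Proposition 3.1: for `β = Σ α_i + Σ_{i ∈ I} α_i` with `I ⊆ {2,…,r−1}` nonconsecutive,
`℘_q(β) = q^{|I|+1} (1+q)^{r−1−2|I|} (2+2q+q²)^{|I|}` as polynomials in `ℤ[q]`. -/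
theorem qAnalog_nonconsecutive_typeA (r : ℕ) (hr : 3 ≤ r) (I : Finset ℕ)
    (hI : ∀ i ∈ I, 2 ≤ i ∧ i ≤ r - 1)
    (hnc : ∀ i ∈ I, ∀ j ∈ I, i < j → i + 2 ≤ j)
    (β : Fin r → ℕ) (hβ : β = fun t => if t.val + 1 ∈ I then 2 else 1) :
    ∀ k : ℕ, (NA r k β : ℤ) =
      ((X : ℤ[X]) ^ (I.card + 1) * (1 + X) ^ (r - 1 - 2 * I.card) *
        (2 + 2 * X + X ^ 2) ^ I.card).coeff k := by
  intro k
  obtain ⟨n, rfl⟩ : ∃ n, r = n + 1 := ⟨r - 1, by omega⟩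
  have hn : n + 1 ∉ I := fun h => by have := hI _ h; omega
  obtain ⟨d, hd, hg⟩ := gf_main I (fun i hi => (hI i hi).1) hnc n hn
  have hf : I.filter (· ≤ n) = I := by
    rw [Finset.filter_eq_self]
    intro i hi
    have := hI i hi
    omega
  rw [hf] at hd hg
  have := NA_eq n k _ (by simp [hn]) _ hg
  rw [hβ, this, show n + 1 - 1 - 2 * I.card = d by omega]
  congr 1
  ring
end

section
/- Let r ≥ 5, let ℓ ≥ 0, and let I = {i_1 < i_2 < ⋯ < i_ℓ} be a set of nonconsecutive integers with 1 < i_1 and i_ℓ < r−2 (so i_{j+1} ≥ i_j + 2 for all j), and let c_{i_1},…,c_{i_ℓ} be positive integers. Let λ ∈ ℕ^r have i_j-th coordinate 1 + c_{i_j} for each j and all other coordinates 1, and set m = Σ_{j=1}^ℓ c_{i_j}. Then, as polynomials in ℤ[q], Σ_{k≥0} N^B_k(λ)·q^k = q^{m+1}·(1+q)^{r−1−2ℓ}·(2+2q+q²)^ℓ. -/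
open Polynomial

/-- The positive roots of the Lie algebra of type `B_r` in simple-root coordinates
(`1`-based positions): the interval vectors `α[i,j]` for `1 ≤ i ≤ j ≤ r`, together with
the vectors `β[i,j]` (value `1` at positions `i..j−1`, value `2` at positions `j..r`)
for `1 ≤ i < j ≤ r`. -/
def isPosRootB (r : ℕ) (v : Fin r → ℕ) : Prop :=
  (∃ i j : ℕ, 1 ≤ i ∧ i ≤ j ∧ j ≤ r ∧
    v = fun t => if i ≤ t.val + 1 ∧ t.val + 1 ≤ j then 1 else 0) ∨
  (∃ i j : ℕ, 1 ≤ i ∧ i < j ∧ j ≤ r ∧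
    v = fun t => if i ≤ t.val + 1 ∧ t.val + 1 ≤ j - 1 then 1
      else if j ≤ t.val + 1 then 2 else 0)

/-- `NB r k λ` is the number of decompositions of the weight `λ` as a sum of exactly `k`
positive roots of `B_r`. -/
noncomputable def NB (r k : ℕ) (lam : Fin r → ℕ) : ℕ :=
  Set.ncard {m : (Fin r → ℕ) →₀ ℕ |
    (∀ v ∈ m.support, isPosRootB r v) ∧
    (m.sum fun _ n => n) = k ∧
    (m.sum fun v n => n • v) = lam}

/-- closed intervals together with the starts of the intervals still alive -/
abbrev IState := Multiset (ℕ × ℕ) × Multiset ℕ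

/-- extend the alive intervals in `A` to position `n+1`, open new ones to reach height `h` -/
def stExt (n h : ℕ) (p : IState) (A : Multiset ℕ) : IState :=
  (p.1 + (p.2 - A).map (fun i => (i, n)), A + Multiset.replicate (h - A.card) (n + 1))

def stChoices (h : ℕ) (p : IState) : Finset (Multiset ℕ) :=
  p.2.powerset.toFinset.filter (fun A => A.card ≤ h)

def stSet (L : ℕ → ℕ) : ℕ → Finset IState
  | 0 => {(0, 0)}
  | n + 1 => ((stSet L n).sigma (fun p => stChoices (L (n + 1)) p)).image
      (fun x => stExt n (L (n + 1)) x.1 x.2)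

def StSpec (L : ℕ → ℕ) (n : ℕ) (p : IState) : Prop :=
  (∀ x ∈ p.1, 1 ≤ x.1 ∧ x.1 ≤ x.2 ∧ x.2 < n) ∧ (∀ i ∈ p.2, 1 ≤ i ∧ i ≤ n) ∧
  ∀ t, 1 ≤ t → t ≤ n →
    p.1.countP (fun x => x.1 ≤ t ∧ t ≤ x.2) + p.2.countP (fun i => i ≤ t) = L t

lemma mem_stChoices (h : ℕ) (p : IState) (A : Multiset ℕ) :
    A ∈ stChoices h p ↔ A ≤ p.2 ∧ A.card ≤ h := by
  simp [stChoices]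

lemma countP_zero_of {α : Type*} (s : Multiset α) (P : α → Prop) [DecidablePred P]
    (h : ∀ x ∈ s, ¬ P x) : s.countP P = 0 := Multiset.countP_eq_zero.2 h

lemma spec_card {L : ℕ → ℕ} {n : ℕ} {p : IState} (hn : 1 ≤ n) (h : StSpec L n p) :
    p.2.card = L n := by
  obtain ⟨h1, h2, h3⟩ := h
  have := h3 n hn le_rfl
  rw [countP_zero_of _ _ (fun x hx => by have := h1 x hx; omega),
    Multiset.countP_eq_card.2 (fun i hi => (h2 i hi).2)] at this
  omega

lemma spec_ext {L : ℕ → ℕ} {n : ℕ} {p : IState} (h : StSpec L n p) {A : Multiset ℕ}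
    (hA : A ≤ p.2) (hc : A.card ≤ L (n + 1)) : StSpec L (n + 1) (stExt n (L (n + 1)) p A) := by
  obtain ⟨C, E⟩ := p
  obtain ⟨h1, h2, h3⟩ := h
  obtain ⟨B, rfl⟩ := Multiset.le_iff_exists_add.1 hA
  simp only at h1 h2 h3
  refine ⟨?_, ?_, ?_⟩
  · intro x hx
    simp only [stExt, add_tsub_cancel_left, Multiset.mem_add, Multiset.mem_map] at hx
    rcases hx with hx | ⟨i, hi, rfl⟩
    · have := h1 x hx; omega
    · have := h2 i (by simp [hi]); simp only; omega
  · intro i hi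
    simp only [stExt, Multiset.mem_add] at hi
    rcases hi with hi | hi
    · have := h2 i (by simp [hi]); omega
    · have := Multiset.eq_of_mem_replicate hi; omega
  · intro t ht htn
    simp only [stExt, add_tsub_cancel_left, Multiset.countP_add, Multiset.countP_map]
    rcases Nat.lt_or_ge n t with hlt | hge
    · have : t = n + 1 := by omega
      subst this
      rw [countP_zero_of C _ (fun x hx => by have := h1 x hx; omega),
        Multiset.countP_eq_card.2 (fun i hi => by have := h2 i (by simp [hi]); omega),
        Multiset.countP_eq_card.2 (fun i hi => by have := Multiset.eq_of_mem_replicate hi; omega),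
        Multiset.filter_eq_nil.2 (fun i hi => by omega)]
      simp
      omega
    · have h4 := h3 t ht hge
      rw [Multiset.countP_add] at h4
      rw [countP_zero_of (Multiset.replicate _ _) _
        (fun i hi => by have := Multiset.eq_of_mem_replicate hi; omega)]
      rw [Multiset.countP_eq_card_filter (fun i => i ≤ t) B] at h4
      have : B.filter (fun i => i ≤ t ∧ t ≤ n) = B.filter (fun i => i ≤ t) :=
        Multiset.filter_congr (fun i _ => by simp [hge])
      rw [this]
      omega

lemma spec_unext {L : ℕ → ℕ} {n : ℕ} {q : IState} (h : StSpec L (n + 1) q) :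
    ∃ p A, StSpec L n p ∧ A ≤ p.2 ∧ A.card ≤ L (n + 1) ∧ stExt n (L (n + 1)) p A = q := by
  have hcard := spec_card (by omega) h
  obtain ⟨C', E'⟩ := q
  obtain ⟨h1, h2, h3⟩ := h
  simp only at h1 h2 h3 hcard
  have hE : E'.filter (fun i => i ≤ n) +
      Multiset.replicate (L (n + 1) - (E'.filter (fun i => i ≤ n)).card) (n + 1) = E' := by
    have e1 := Multiset.filter_add_not (fun i => i ≤ n) E'
    have e2 : E'.filter (fun i => ¬ i ≤ n) =
        Multiset.replicate (E'.filter (fun i => ¬ i ≤ n)).card (n + 1) := by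
      rw [Multiset.eq_replicate]
      refine ⟨rfl, fun b hb => ?_⟩
      rw [Multiset.mem_filter] at hb
      have := h2 b hb.1
      omega
    have e3 : (E'.filter (fun i => i ≤ n)).card + (E'.filter (fun i => ¬ i ≤ n)).card
        = L (n + 1) := by
      rw [← Multiset.card_add, e1, hcard]
    rw [show L (n + 1) - (E'.filter (fun i => i ≤ n)).card =
      (E'.filter (fun i => ¬ i ≤ n)).card by omega, ← e2, e1]
  have hC : C'.filter (fun x => x.2 < n) +
      ((C'.filter (fun x => ¬ x.2 < n)).map Prod.fst).map (fun i => (i, n)) = C' := by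
    have e1 := Multiset.filter_add_not (fun x : ℕ × ℕ => x.2 < n) C'
    rw [Multiset.map_map]
    conv_rhs => rw [← e1]
    congr 1
    conv_rhs => rw [← Multiset.map_id (C'.filter (fun x => ¬ x.2 < n))]
    refine Multiset.map_congr rfl (fun x hx => ?_)
    rw [Multiset.mem_filter] at hx
    have := h1 x hx.1
    ext
    · rfl
    · simp; omega
  refine ⟨(C'.filter (fun x => x.2 < n), E'.filter (fun i => i ≤ n) +
    (C'.filter (fun x => ¬ x.2 < n)).map Prod.fst), E'.filter (fun i => i ≤ n),
    ⟨?_, ?_, ?_⟩, ?_, ?_, ?_⟩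
  · intro x hx
    simp only [Multiset.mem_filter] at hx
    have := h1 x hx.1
    omega
  · intro i hi
    simp only [Multiset.mem_add, Multiset.mem_filter, Multiset.mem_map] at hi
    rcases hi with hi | ⟨x, hx, rfl⟩
    · have := h2 i hi.1; omega
    · have := h1 x hx.1; omega
  · intro t ht htn
    have h4 := h3 t ht (by omega)
    rw [← hC, ← hE] at h4
    simp only [Multiset.countP_add] at h4 ⊢
    rw [countP_zero_of (Multiset.replicate _ _) _
        (fun i hi => by have := Multiset.eq_of_mem_replicate hi; omega)] at h4
    rw [Multiset.countP_map (fun i => (i, n))] at h4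
    rw [Multiset.countP_eq_card_filter (fun i => i ≤ t)
      ((C'.filter (fun x => ¬ x.2 < n)).map Prod.fst)]
    rw [Multiset.filter_congr (q := fun i => i ≤ t) (fun i _ => by simp [htn])] at h4
    omega
  · exact Multiset.le_add_right _ _
  · rw [← hcard]; exact Multiset.card_le_card (Multiset.filter_le _ _)
  · simp only [stExt, add_tsub_cancel_left]
    rw [hE, hC]

lemma mem_stSet (L : ℕ → ℕ) (n : ℕ) (q : IState) : q ∈ stSet L n ↔ StSpec L n q := by
  induction n generalizing q with
  | zero =>
    simp only [stSet, Finset.mem_singleton]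
    constructor
    · rintro rfl
      refine ⟨by simp, by simp, fun t h1 h2 => by omega⟩
    · rintro ⟨h1, h2, -⟩
      ext1
      · refine Multiset.eq_zero_of_forall_notMem (fun x hx => ?_)
        have := h1 x hx; omega
      · refine Multiset.eq_zero_of_forall_notMem (fun x hx => ?_)
        have := h2 x hx; omega
  | succ n ih =>
    simp only [stSet, Finset.mem_image, Finset.mem_sigma, Sigma.exists, ih, mem_stChoices]
    constructor
    · rintro ⟨p, A, ⟨hp, hA, hc⟩, rfl⟩
      exact spec_ext hp hA hc
    · intro h
      obtain ⟨p, A, a, b, c, d⟩ := spec_unext h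
      exact ⟨p, A, ⟨a, b, c⟩, d⟩

lemma stExt_inj {L : ℕ → ℕ} {n h : ℕ} {p p' : IState} {A A' : Multiset ℕ}
    (hp : StSpec L n p) (hp' : StSpec L n p') (hA : A ≤ p.2) (hA' : A' ≤ p'.2)
    (he : stExt n h p A = stExt n h p' A') : p = p' ∧ A = A' := by
  have key : ∀ (p : IState) (A : Multiset ℕ), StSpec L n p → A ≤ p.2 →
      (stExt n h p A).1.filter (fun x => x.2 < n) = p.1 ∧
      (stExt n h p A).2.filter (fun i => i ≤ n) = A ∧
      ((stExt n h p A).1.filter (fun x => ¬ x.2 < n)).map Prod.fst = p.2 - A := by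
    rintro ⟨C, E⟩ A ⟨h1, h2, -⟩ hA
    simp only at h1 h2 hA
    refine ⟨?_, ?_, ?_⟩
    · simp only [stExt, Multiset.filter_add]
      rw [Multiset.filter_eq_self.2 (fun x hx => (h1 x hx).2.2), Multiset.filter_eq_nil.2]
      · simp
      · intro x hx
        obtain ⟨i, -, rfl⟩ := Multiset.mem_map.1 hx
        simp
    · simp only [stExt, Multiset.filter_add]
      rw [Multiset.filter_eq_self.2 (fun x hx => (h2 x (Multiset.mem_of_le hA hx)).2),
        Multiset.filter_eq_nil.2]
      · simp
      · intro x hx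
        have := Multiset.eq_of_mem_replicate hx
        omega
    · simp only [stExt, Multiset.filter_add]
      rw [Multiset.filter_eq_nil.2 (fun x hx => by have := h1 x hx; omega),
        Multiset.filter_eq_self.2]
      · simp
      · intro x hx
        obtain ⟨i, -, rfl⟩ := Multiset.mem_map.1 hx
        simp
  obtain ⟨a1, a2, a3⟩ := key p A hp hA
  obtain ⟨b1, b2, b3⟩ := key p' A' hp' hA'
  rw [he] at a1 a2 a3
  have hAA : A = A' := a2.symm.trans b2
  refine ⟨Prod.ext (a1.symm.trans b1) ?_, hAA⟩
  rw [← tsub_add_cancel_of_le hA, ← tsub_add_cancel_of_le hA', ← a3, ← b3, hAA]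

lemma sum_stSet_succ (L : ℕ → ℕ) (n : ℕ) (f : IState → ℤ[X]) :
    ∑ q ∈ stSet L (n + 1), f q =
      ∑ p ∈ stSet L n, ∑ A ∈ stChoices (L (n + 1)) p, f (stExt n (L (n + 1)) p A) := by
  rw [stSet, Finset.sum_image, Finset.sum_sigma]
  rintro ⟨p, A⟩ hx ⟨p', A'⟩ hx' he
  simp only [Finset.coe_sigma, Set.mem_sigma_iff, Finset.mem_coe, mem_stSet, mem_stChoices] at hx hx'
  obtain ⟨rfl, rfl⟩ := stExt_inj hx.1 hx'.1 hx.2.1 hx'.2.1 he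
  rfl

def stCard (p : IState) : ℕ := p.1.card + p.2.card

lemma stCard_ext (n h : ℕ) (p : IState) (A : Multiset ℕ) (hA : A ≤ p.2) :
    stCard (stExt n h p A) = stCard p + (h - A.card) := by
  have := Multiset.card_le_card hA
  simp only [stCard, stExt, Multiset.card_add, Multiset.card_map, Multiset.card_sub hA,
    Multiset.card_replicate]
  omega

lemma choices_one (p : IState) :
    stChoices 1 p = insert 0 (p.2.toFinset.image (fun i => ({i} : Multiset ℕ))) := by
  ext A
  simp only [mem_stChoices, Finset.mem_insert, Finset.mem_image, Multiset.mem_toFinset]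
  constructor
  · rintro ⟨h1, h2⟩
    rcases Nat.le_one_iff_eq_zero_or_eq_one.1 h2 with h | h
    · left; exact Multiset.card_eq_zero.1 h
    · right
      obtain ⟨a, rfl⟩ := Multiset.card_eq_one.1 h
      exact ⟨a, Multiset.singleton_le.1 h1, rfl⟩
  · rintro (rfl | ⟨a, ha, rfl⟩)
    · simp
    · simp [ha]

noncomputable def stW (L : ℕ → ℕ) (n : ℕ) : ℤ[X] := ∑ p ∈ stSet L n, X ^ stCard p

lemma stW_one_gen (L : ℕ → ℕ) (n : ℕ) (h : L (n + 1) = 1) :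
    stW L (n + 1) = ∑ p ∈ stSet L n, X ^ stCard p * (X + (p.2.toFinset.card : ℤ[X])) := by
  rw [stW, sum_stSet_succ]
  refine Finset.sum_congr rfl (fun p _ => ?_)
  have : ∀ A ∈ stChoices (L (n + 1)) p, (X : ℤ[X]) ^ stCard (stExt n (L (n + 1)) p A) =
      X ^ stCard p * X ^ (1 - A.card) := by
    intro A hA
    rw [stCard_ext _ _ _ _ ((mem_stChoices _ _ _).1 hA).1, pow_add, h]
  rw [Finset.sum_congr rfl this, h, ← Finset.mul_sum, choices_one, Finset.sum_insert (by simp),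
    Finset.sum_image (by intro a _ b _ hab; simpa using hab)]
  simp

lemma stW_zero_one (L : ℕ → ℕ) (h : L 1 = 1) : stW L 1 = X := by
  rw [stW_one_gen L 0 h]
  simp [stSet, stCard]

lemma stW_one (L : ℕ → ℕ) (n : ℕ) (hn : 1 ≤ n) (h0 : L n = 1) (h : L (n + 1) = 1) :
    stW L (n + 1) = stW L n * (1 + X) := by
  rw [stW_one_gen L n h, stW, Finset.sum_mul]
  refine Finset.sum_congr rfl (fun p hp => ?_)
  have := spec_card hn ((mem_stSet _ _ _).1 hp)
  rw [h0] at this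
  obtain ⟨a, ha⟩ := Multiset.card_eq_one.1 this
  rw [ha]
  simp [add_comm]

lemma stW_two (L : ℕ → ℕ) (n c : ℕ) (hn : 1 ≤ n) (hc : 1 ≤ c) (h0 : L n = 1)
    (h1 : L (n + 1) = 1 + c) (h2 : L (n + 2) = 1) :
    stW L (n + 2) = stW L n * (X ^ c * (2 + 2 * X + X ^ 2)) := by
  rw [stW_one_gen L (n + 1) h2, stW, Finset.sum_mul, sum_stSet_succ]
  refine Finset.sum_congr rfl (fun p hp => ?_)
  have hs := (mem_stSet _ _ _).1 hp
  have := spec_card hn hs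
  rw [h0] at this
  obtain ⟨a, ha⟩ := Multiset.card_eq_one.1 this
  have han : a ≤ n := (hs.2.1 a (by simp [ha])).2
  have hch : stChoices (L (n + 1)) p = {0, {a}} := by
    ext A
    simp only [mem_stChoices, ha, Finset.mem_insert, Finset.mem_singleton, Multiset.le_singleton]
    constructor
    · exact fun h => h.1
    · intro h
      refine ⟨h, ?_⟩
      rcases h with rfl | rfl <;> simp [h1]
  rw [hch, Finset.sum_pair (by simp [eq_comm]), stCard_ext _ _ _ _ (by simp),
    stCard_ext _ _ _ _ (by simp [ha]), h1]
  have e1 : (stExt n (1 + c) p 0).2.toFinset.card = 1 := by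
    simp [stExt, Multiset.toFinset_replicate]
  have e2 : (stExt n (1 + c) p {a}).2.toFinset.card = 2 := by
    have : (1 + c - 1) ≠ 0 := by omega
    simp only [stExt, Multiset.toFinset_add, Multiset.toFinset_replicate, Multiset.card_singleton,
      if_neg this, Multiset.toFinset_singleton]
    rw [Finset.card_union_of_disjoint (by simp; omega)]
    simp
  rw [e1, e2]
  simp only [Multiset.card_zero, Multiset.card_singleton, Nat.sub_zero, Nat.add_sub_cancel_left]
  push_cast
  ring

lemma stW_closed (r : ℕ) (I : Finset ℕ)
    (hI : ∀ i ∈ I, 1 < i ∧ i < r - 2)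
    (hnc : ∀ i ∈ I, ∀ j ∈ I, i < j → i + 2 ≤ j)
    (c : ℕ → ℕ) (hc : ∀ i ∈ I, 1 ≤ c i) (L : ℕ → ℕ)
    (hL : L = fun t => if t ∈ I then 1 + c t else 1) (n : ℕ) (hn : 1 ≤ n) (hnI : n ∉ I) :
    2 * (I.filter (· ≤ n)).card + 1 ≤ n ∧
    stW L n = X ^ ((∑ i ∈ I.filter (· ≤ n), c i) + 1) *
      (1 + X) ^ (n - 1 - 2 * (I.filter (· ≤ n)).card) *
        (2 + 2 * X + X ^ 2) ^ (I.filter (· ≤ n)).card := by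
  induction n using Nat.strong_induction_on with
  | _ n ih =>
  have hL1 : ∀ t, t ∉ I → L t = 1 := fun t ht => by simp [hL, ht]
  rcases Nat.lt_or_ge 1 n with h1 | h1
  · obtain ⟨k, rfl⟩ : ∃ k, n = k + 1 := ⟨n - 1, by omega⟩
    by_cases hk : k ∈ I
    · have hk2 := hI k hk
      obtain ⟨j, rfl⟩ : ∃ j, k = j + 1 := ⟨k - 1, by omega⟩
      have hj : j ∉ I := fun hj => by have := hnc j hj _ hk (by omega); omega
      obtain ⟨i1, i2⟩ := ih j (by omega) (by omega) hj
      have hf : I.filter (· ≤ j + 1 + 1) = insert (j + 1) (I.filter (· ≤ j)) := by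
        ext t
        simp only [Finset.mem_filter, Finset.mem_insert]
        constructor
        · rintro ⟨ht, hl⟩
          by_cases h : t = j + 1 + 1
          · subst h; exact absurd ht hnI
          · by_cases h : t = j + 1
            · exact Or.inl h
            · exact Or.inr ⟨ht, by omega⟩
        · rintro (rfl | ⟨ht, hl⟩)
          · exact ⟨hk, by omega⟩
          · exact ⟨ht, by omega⟩
      have hni : j + 1 ∉ I.filter (· ≤ j) := by simp
      rw [hf, Finset.card_insert_of_notMem hni, Finset.sum_insert hni]
      refine ⟨by omega, ?_⟩
      rw [stW_two L j (c (j + 1)) (by omega) (hc _ hk) (hL1 _ hj) (by simp [hL, hk]) (hL1 _ hnI),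
        i2, show j + 1 + 1 - 1 - 2 * ((I.filter (· ≤ j)).card + 1) =
          j - 1 - 2 * (I.filter (· ≤ j)).card by omega]
      ring
    · obtain ⟨i1, i2⟩ := ih k (by omega) (by omega) hk
      have hf : I.filter (· ≤ k + 1) = I.filter (· ≤ k) := by
        refine Finset.filter_congr (fun t ht => ?_)
        have : t ≠ k + 1 := fun h => hnI (h ▸ ht)
        omega
      rw [hf]
      refine ⟨by omega, ?_⟩
      rw [stW_one L k (by omega) (hL1 _ hk) (hL1 _ hnI), i2,
        show k + 1 - 1 - 2 * (I.filter (· ≤ k)).card =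
          (k - 1 - 2 * (I.filter (· ≤ k)).card) + 1 by omega]
      ring
  · have : n = 1 := by omega
    subst this
    have hf : I.filter (· ≤ 1) = ∅ := by
      rw [Finset.filter_eq_empty_iff]
      intro t ht
      have := hI t ht
      omega
    rw [hf, stW_zero_one L (hL1 _ hnI)]
    simp

/-- the interval vector -/
def ivec (r : ℕ) (x : ℕ × ℕ) : Fin r → ℕ :=
  fun t => if x.1 ≤ t.val + 1 ∧ t.val + 1 ≤ x.2 then 1 else 0

lemma ivec_inj (r : ℕ) {x y : ℕ × ℕ} (hx : 1 ≤ x.1 ∧ x.1 ≤ x.2 ∧ x.2 ≤ r)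
    (hy : 1 ≤ y.1 ∧ y.1 ≤ y.2 ∧ y.2 ≤ r) (h : ivec r x = ivec r y) : x = y := by
  have key : ∀ t, 1 ≤ t → t ≤ r → ((x.1 ≤ t ∧ t ≤ x.2) ↔ (y.1 ≤ t ∧ t ≤ y.2)) := by
    intro t h1 h2
    have := congrFun h ⟨t - 1, by omega⟩
    simp only [ivec, Nat.sub_add_cancel h1] at this
    split_ifs at this with u v v <;> first | exact iff_of_true u v | exact iff_of_false u v | omega
  have a := key x.1 (by omega) (by omega)
  have b := key x.2 (by omega) (by omega)
  have c := key y.1 (by omega) (by omega)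
  have d := key y.2 (by omega) (by omega)
  ext <;> omega

def stFull (r : ℕ) (p : IState) : Multiset (ℕ × ℕ) := p.1 + p.2.map (fun i => (i, r))

lemma sum_ivec (r : ℕ) (P : Multiset (ℕ × ℕ)) (t : Fin r) :
    (P.map (ivec r)).sum t = P.countP (fun x => x.1 ≤ t.val + 1 ∧ t.val + 1 ≤ x.2) := by
  induction P using Multiset.induction_on with
  | empty => simp
  | cons a s ih =>
    rw [Multiset.map_cons, Multiset.sum_cons, Pi.add_apply, ih, Multiset.countP_cons, ivec, add_comm]

lemma stFull_mem {L : ℕ → ℕ} {r : ℕ} {p : IState} (h : StSpec L r p) :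
    ∀ x ∈ stFull r p, 1 ≤ x.1 ∧ x.1 ≤ x.2 ∧ x.2 ≤ r := by
  intro x hx
  simp only [stFull, Multiset.mem_add, Multiset.mem_map] at hx
  rcases hx with hx | ⟨i, hi, rfl⟩
  · have := h.1 x hx; omega
  · have := h.2.1 i hi; simp only; omega

lemma stFull_sum {L : ℕ → ℕ} {r : ℕ} {p : IState} (h : StSpec L r p) :
    ((stFull r p).map (ivec r)).sum = fun t : Fin r => L (t.val + 1) := by
  funext t
  rw [sum_ivec, ← h.2.2 (t.val + 1) (by omega) (by omega), stFull, Multiset.countP_add,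
    Multiset.countP_map, Multiset.countP_eq_card_filter (fun i => i ≤ t.val + 1) p.2]
  congr 2
  refine Multiset.filter_congr (fun i _ => ?_)
  have := t.2
  omega

lemma stFull_inj {L : ℕ → ℕ} {r : ℕ} {p q : IState} (hp : StSpec L r p) (hq : StSpec L r q)
    (h : stFull r p = stFull r q) : p = q := by
  have key : ∀ p : IState, StSpec L r p → (stFull r p).filter (fun x => x.2 < r) = p.1 ∧
      ((stFull r p).filter (fun x => ¬ x.2 < r)).map Prod.fst = p.2 := by
    rintro ⟨C, E⟩ ⟨h1, -, -⟩
    simp only at h1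
    constructor
    · simp only [stFull, Multiset.filter_add]
      rw [Multiset.filter_eq_self.2 (fun x hx => (h1 x hx).2.2), Multiset.filter_eq_nil.2]
      · simp
      · intro x hx
        obtain ⟨i, -, rfl⟩ := Multiset.mem_map.1 hx
        simp
    · simp only [stFull, Multiset.filter_add]
      rw [Multiset.filter_eq_nil.2 (fun x hx => by have := h1 x hx; omega),
        Multiset.filter_eq_self.2]
      · simp
      · intro x hx
        obtain ⟨i, -, rfl⟩ := Multiset.mem_map.1 hx
        simp
  ext1
  · rw [← (key p hp).1, ← (key q hq).1, h]
  · rw [← (key p hp).2, ← (key q hq).2, h]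

lemma stFull_surj {L : ℕ → ℕ} {r : ℕ} (P : Multiset (ℕ × ℕ))
    (hP : ∀ x ∈ P, 1 ≤ x.1 ∧ x.1 ≤ x.2 ∧ x.2 ≤ r)
    (hs : (P.map (ivec r)).sum = fun t : Fin r => L (t.val + 1)) :
    ∃ p, StSpec L r p ∧ stFull r p = P := by
  have hC : P.filter (fun x => x.2 < r) +
      ((P.filter (fun x => ¬ x.2 < r)).map Prod.fst).map (fun i => (i, r)) = P := by
    have e1 := Multiset.filter_add_not (fun x : ℕ × ℕ => x.2 < r) P
    rw [Multiset.map_map]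
    conv_rhs => rw [← e1]
    congr 1
    conv_rhs => rw [← Multiset.map_id (P.filter (fun x => ¬ x.2 < r))]
    refine Multiset.map_congr rfl (fun x hx => ?_)
    rw [Multiset.mem_filter] at hx
    have := hP x hx.1
    ext
    · rfl
    · simp; omega
  refine ⟨(P.filter (fun x => x.2 < r),
    (P.filter (fun x : ℕ × ℕ => ¬ x.2 < r)).map Prod.fst),
    ⟨?_, ?_, ?_⟩, hC⟩
  · intro x hx
    simp only [Multiset.mem_filter] at hx
    have := hP x hx.1
    omega
  · intro i hi
    simp only [Multiset.mem_filter, Multiset.mem_map] at hi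
    obtain ⟨x, hx, rfl⟩ := hi
    have := hP x hx.1
    omega
  · intro t ht htr
    have h4 := congrFun hs ⟨t - 1, by omega⟩
    rw [sum_ivec] at h4
    simp only [Nat.sub_add_cancel ht] at h4
    rw [← hC] at h4
    simp only [Multiset.countP_add] at h4 ⊢
    rw [Multiset.countP_map (fun i => (i, r))] at h4
    rw [Multiset.countP_eq_card_filter (fun i => i ≤ t)
      ((P.filter (fun x => ¬ x.2 < r)).map Prod.fst)]
    rw [Multiset.filter_congr (q := fun i => i ≤ t) (fun i _ => by simp [htr])] at h4
    exact h4

lemma map_inj_of_injOn {α β : Type*} (f : α → β) (S : Set α) (hf : Set.InjOn f S)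
    (P Q : Multiset α) (hP : ∀ x ∈ P, x ∈ S) (hQ : ∀ x ∈ Q, x ∈ S)
    (h : P.map f = Q.map f) : P = Q := by
  rcases isEmpty_or_nonempty α with he | he
  · rw [Multiset.eq_zero_of_forall_notMem (s := P) (fun x => he.elim x),
      Multiset.eq_zero_of_forall_notMem (s := Q) (fun x => he.elim x)]
  have key : ∀ P : Multiset α, (∀ x ∈ P, x ∈ S) →
      (P.map f).map (Function.invFunOn f S) = P := by
    intro P hP
    rw [Multiset.map_map]
    conv_rhs => rw [← Multiset.map_id P]
    exact Multiset.map_congr rfl (fun x hx => hf.leftInvOn_invFunOn (hP x hx))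
  rw [← key P hP, ← key Q hQ, h]

lemma NB_eq (r k : ℕ) (hr : 1 ≤ r) (L : ℕ → ℕ) (hL : L r = 1) :
    NB r k (fun t : Fin r => L (t.val + 1)) = ((stSet L r).filter (fun p => stCard p = k)).card := by
  classical
  rw [NB, ← Set.ncard_coe_finset]
  symm
  have hset : {m : (Fin r → ℕ) →₀ ℕ |
      (∀ v ∈ m.support, isPosRootB r v) ∧ (m.sum fun _ n => n) = k ∧
      (m.sum fun v n => n • v) = fun t : Fin r => L (t.val + 1)} =
      (fun p : IState => Multiset.toFinsupp ((stFull r p).map (ivec r))) ''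
        ((stSet L r).filter (fun p => stCard p = k) : Finset IState) := by
    ext m
    obtain ⟨Q, rfl⟩ := Multiset.toFinsupp.surjective m
    have c1 : ((Multiset.toFinsupp Q).sum fun _ n => n) = Q.card := Multiset.toFinsupp_sum_eq Q
    have c2 : ((Multiset.toFinsupp Q).sum fun v n => n • v) = Q.sum := by
      rw [Finset.sum_multiset_count Q]
      simp [Finsupp.sum]
    simp only [Set.mem_setOf_eq, c1, c2, Multiset.toFinsupp_support, Multiset.mem_toFinset,
      Set.mem_image, Finset.coe_filter, mem_stSet, EmbeddingLike.apply_eq_iff_eq]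
    constructor
    · rintro ⟨h1, h2, h3⟩
      have hα : ∀ v ∈ Q, ∃ x : ℕ × ℕ, (1 ≤ x.1 ∧ x.1 ≤ x.2 ∧ x.2 ≤ r) ∧ ivec r x = v := by
        intro v hv
        rcases h1 v hv with ⟨i, j, a, b, c, rfl⟩ | ⟨i, j, a, b, c, rfl⟩
        · exact ⟨(i, j), ⟨a, b, c⟩, rfl⟩
        · exfalso
          have hle := Multiset.single_le_sum (s := Q) (fun _ _ => zero_le) _ hv
          have hle := hle ⟨r - 1, by omega⟩
          rw [h3] at hle
          simp only [Nat.sub_add_cancel hr, hL] at hle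
          rw [if_neg (by omega), if_pos c] at hle
          omega
      choose! g hg using hα
      have hmap : (Q.map g).map (ivec r) = Q := by
        rw [Multiset.map_map]
        conv_rhs => rw [← Multiset.map_id Q]
        exact Multiset.map_congr rfl (fun x hx => (hg x hx).2)
      obtain ⟨p, hp, hpf⟩ := stFull_surj (L := L) (r := r) (Q.map g) (by
        intro x hx
        obtain ⟨v, hv, rfl⟩ := Multiset.mem_map.1 hx
        exact (hg v hv).1) (by rw [hmap, h3])
      refine ⟨p, ⟨hp, ?_⟩, by rw [hpf, hmap]⟩
      rw [← h2, ← Multiset.card_map g Q, ← hpf]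
      simp [stFull, stCard]
    · rintro ⟨p, ⟨hp, hk⟩, rfl⟩
      refine ⟨?_, ?_, stFull_sum hp⟩
      · intro v hv
        obtain ⟨x, hx, rfl⟩ := Multiset.mem_map.1 hv
        obtain ⟨a, b, c⟩ := stFull_mem hp x hx
        exact Or.inl ⟨x.1, x.2, a, b, c, rfl⟩
      · rw [← hk]; simp [stFull, stCard]
  rw [hset, Set.ncard_image_of_injOn]
  intro p hp q hq h
  simp only [Finset.coe_filter, Set.mem_setOf_eq, mem_stSet] at hp hq
  have h' := Multiset.toFinsupp.injective h
  exact stFull_inj hp.1 hq.1 (map_inj_of_injOn (ivec r)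
    {x | 1 ≤ x.1 ∧ x.1 ≤ x.2 ∧ x.2 ≤ r} (fun x hx y hy hxy => ivec_inj r hx hy hxy) _ _
    (stFull_mem hp.1) (stFull_mem hq.1) h')

/-- Proposition 3.4 (type B): for `λ = Σ α_i + Σ_j c_{i_j} α_{i_j}` with
`I = {i_1 < ⋯ < i_ℓ}` nonconsecutive, `1 < i_1`, `i_ℓ < r−2`, and positive
coefficients `c`, `℘_q(λ) = q^{m+1} (1+q)^{r−1−2ℓ} (2+2q+q²)^ℓ`. -/
theorem qAnalog_nonconsecutive_typeB (r ℓ : ℕ) (hr : 5 ≤ r)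
    (I : Finset ℕ) (hcard : I.card = ℓ)
    (hI : ∀ i ∈ I, 1 < i ∧ i < r - 2)
    (hnc : ∀ i ∈ I, ∀ j ∈ I, i < j → i + 2 ≤ j)
    (c : ℕ → ℕ) (hc : ∀ i ∈ I, 1 ≤ c i)
    (m : ℕ) (hm : m = ∑ i ∈ I, c i)
    (lam : Fin r → ℕ)
    (hlam : lam = fun t => if t.val + 1 ∈ I then 1 + c (t.val + 1) else 1) :
    ∀ k : ℕ, (NB r k lam : ℤ) =
      ((X : ℤ[X]) ^ (m + 1) * (1 + X) ^ (r - 1 - 2 * ℓ) *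
        (2 + 2 * X + X ^ 2) ^ ℓ).coeff k := by
  intro k
  have hrI : r ∉ I := fun h => by have := hI r h; omega
  have hf : I.filter (· ≤ r) = I := by
    refine Finset.filter_true_of_mem (fun i hi => ?_)
    have := hI i hi
    omega
  obtain ⟨-, h⟩ := stW_closed r I hI hnc c hc _ rfl r (by omega) hrI
  rw [hf, hcard, ← hm] at h
  rw [← h, hlam]
  have e := NB_eq r k (by omega) (fun t => if t ∈ I then 1 + c t else 1) (by simp [hrI])
  rw [e, stW, Polynomial.finsetSum_coeff]
  simp only [coeff_X_pow, eq_comm (a := k)]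
  rw [Finset.sum_boole]
end

section
/- Let r ≥ 5, let ℓ ≥ 0, and let I = {i_1 < i_2 < ⋯ < i_ℓ} be a set of nonconsecutive integers with 1 < i_1 and i_ℓ < r−2 (so i_{j+1} ≥ i_j + 2 for all j), and let c_{i_1},…,c_{i_ℓ} be positive integers. Let λ ∈ ℕ^r have i_j-th coordinate 1 + c_{i_j} for each j and all other coordinates 1, and set m = Σ_{j=1}^ℓ c_{i_j}. Then, as polynomials in ℤ[q], Σ_{k≥0} N^C_k(λ)·q^k = q^{m+1}·(1+q)^{r−1−2ℓ}·(2+2q+q²)^ℓ. -/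
open Polynomial

/-- The positive roots of the Lie algebra of type `C_r` in simple-root coordinates
(`1`-based positions): the interval vectors `α[i,j]` for `1 ≤ i ≤ j ≤ r`, the vectors
`γ[i,j]` (value `1` at positions `i..j−1`, value `2` at positions `j..r−1`, value `1` at
position `r`) for `1 ≤ i < j ≤ r−1`, and the highest root `(2,2,…,2,1)`. -/
def isPosRootC (r : ℕ) (v : Fin r → ℕ) : Prop :=
  (∃ i j : ℕ, 1 ≤ i ∧ i ≤ j ∧ j ≤ r ∧
    v = fun t => if i ≤ t.val + 1 ∧ t.val + 1 ≤ j then 1 else 0) ∨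
  (∃ i j : ℕ, 1 ≤ i ∧ i < j ∧ j ≤ r - 1 ∧
    v = fun t => if i ≤ t.val + 1 ∧ t.val + 1 ≤ j - 1 then 1
      else if j ≤ t.val + 1 ∧ t.val + 1 ≤ r - 1 then 2
      else if t.val + 1 = r then 1 else 0) ∨
  (v = fun t => if t.val + 1 ≤ r - 1 then 2 else 1)

/-- `NC r k λ` is the number of decompositions of the weight `λ` as a sum of exactly `k`
positive roots of `C_r`. -/
noncomputable def NC (r k : ℕ) (lam : Fin r → ℕ) : ℕ :=
  Set.ncard {m : (Fin r → ℕ) →₀ ℕ |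
    (∀ v ∈ m.support, isPosRootC r v) ∧
    (m.sum fun _ n => n) = k ∧
    (m.sum fun v n => n • v) = lam}

namespace KC

/-- `M` is a decomposition of `L` restricted to `1..n` into intervals. -/
def Valid (L : ℕ → ℕ) (n : ℕ) (M : Multiset (ℕ × ℕ)) : Prop :=
  (∀ p ∈ M, 1 ≤ p.1 ∧ p.1 ≤ p.2 ∧ p.2 ≤ n) ∧
  ∀ t, 1 ≤ t → t ≤ n → M.countP (fun p => p.1 ≤ t ∧ t ≤ p.2) = L t

/-- intervals ending at `n` -/
def F (n : ℕ) (M : Multiset (ℕ × ℕ)) : Multiset (ℕ × ℕ) := M.filter (fun p => p.2 = n)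

/-- extend the intervals in `U` to `n+1`, and fill up with singletons -/
def build (L : ℕ → ℕ) (n : ℕ) (M U : Multiset (ℕ × ℕ)) : Multiset (ℕ × ℕ) :=
  (M - U) + U.map (fun p => (p.1, n + 1)) + Multiset.replicate (L (n + 1) - U.card) (n + 1, n + 1)

/-- the admissible sets of intervals to be extended -/
def Us (L : ℕ → ℕ) (n : ℕ) (M : Multiset (ℕ × ℕ)) : Finset (Multiset (ℕ × ℕ)) :=
  (F n M).powerset.toFinset.filter (fun U => U.card ≤ L (n + 1))

lemma mem_Us {L : ℕ → ℕ} {n : ℕ} {M U : Multiset (ℕ × ℕ)} :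
    U ∈ Us L n M ↔ U ≤ F n M ∧ U.card ≤ L (n + 1) := by
  simp [Us]

/-- all decompositions -/
def D (L : ℕ → ℕ) : ℕ → Finset (Multiset (ℕ × ℕ))
  | 0 => {0}
  | n + 1 => ((D L n).sigma (fun M => Us L n M)).image (fun x => build L n x.1 x.2)

lemma split_of_le {n : ℕ} {M U : Multiset (ℕ × ℕ)} (h : U ≤ F n M) :
    ∃ R, M = R + U ∧ ∀ p ∈ U, p.2 = n := by
  have h1 : U ≤ M := h.trans (Multiset.filter_le _ _)
  refine ⟨M - U, (tsub_add_cancel_of_le h1).symm, fun p hp => ?_⟩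
  have := Multiset.mem_of_le h hp
  simpa [F] using (Multiset.mem_filter.1 this).2

lemma build_eq (L : ℕ → ℕ) (n : ℕ) (R U : Multiset (ℕ × ℕ)) :
    build L n (R + U) U = R + U.map (fun p => (p.1, n + 1)) +
      Multiset.replicate (L (n + 1) - U.card) (n + 1, n + 1) := by
  simp [build]

lemma valid_build {L : ℕ → ℕ} {n : ℕ} {M U : Multiset (ℕ × ℕ)} (hM : Valid L n M)
    (hU : U ∈ Us L n M) : Valid L (n + 1) (build L n M U) := by
  rw [mem_Us] at hU
  obtain ⟨hU, hc⟩ := hU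
  obtain ⟨R, rfl, hUn⟩ := split_of_le hU
  rw [build_eq]
  obtain ⟨h1, h2⟩ := hM
  constructor
  · intro p hp
    simp only [Multiset.mem_add, Multiset.mem_map, Multiset.mem_replicate] at hp
    rcases hp with (hp | ⟨q, hq, rfl⟩) | ⟨_, rfl⟩
    · have := h1 p (by simp [hp]); omega
    · have := h1 q (by simp [hq]); simp only; omega
    · simp
  · intro t ht htn
    rw [Multiset.countP_add, Multiset.countP_add, Multiset.countP_map,
      ← Multiset.countP_eq_card_filter]
    by_cases h : t = n + 1
    · subst h
      have a1 : R.countP (fun p => p.1 ≤ n + 1 ∧ n + 1 ≤ p.2) = 0 := by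
        rw [Multiset.countP_eq_zero]
        intro p hp
        have := h1 p (by simp [hp]); omega
      have a2 : U.countP (fun p => (p.1, n+1).1 ≤ n + 1 ∧ n + 1 ≤ (p.1, n+1).2) = U.card := by
        rw [Multiset.countP_eq_card]
        intro p hp
        have := h1 p (by simp [hp]); simp only; omega
      have a3 : (Multiset.replicate (L (n + 1) - U.card) (n + 1, n + 1)).countP
          (fun p => p.1 ≤ n + 1 ∧ n + 1 ≤ p.2) = L (n + 1) - U.card := by
        conv_rhs => rw [← Multiset.card_replicate (L (n + 1) - U.card) ((n + 1, n + 1) : ℕ × ℕ)]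
        rw [Multiset.countP_eq_card]
        intro p hp
        rw [Multiset.eq_of_mem_replicate hp]; simp
      rw [a1, a2, a3]; omega
    · have a2 : U.countP (fun p => (p.1, n+1).1 ≤ t ∧ t ≤ (p.1, n+1).2)
          = U.countP (fun p => p.1 ≤ t ∧ t ≤ p.2) := by
        apply Multiset.countP_congr rfl
        intro p hp
        have := h1 p (by simp [hp]); have := hUn p hp; simp only [eq_iff_iff]; omega
      have a3 : (Multiset.replicate (L (n + 1) - U.card) (n + 1, n + 1)).countP
          (fun p => p.1 ≤ t ∧ t ≤ p.2) = 0 := by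
        rw [Multiset.countP_eq_zero]
        intro p hp
        rw [Multiset.eq_of_mem_replicate hp]; simp only; omega
      rw [a2, a3, add_zero, ← Multiset.countP_add]
      exact h2 t ht (by omega)

lemma exists_build {L : ℕ → ℕ} {n : ℕ} {N : Multiset (ℕ × ℕ)} (hN : Valid L (n + 1) N) :
    ∃ M U, Valid L n M ∧ U ∈ Us L n M ∧ build L n M U = N := by
  obtain ⟨h1, h2⟩ := hN
  obtain ⟨R, hR⟩ : ∃ R, R = N.filter (fun p => p.2 ≤ n) := ⟨_, rfl⟩
  obtain ⟨N', hN'⟩ : ∃ R, R = N.filter (fun p => ¬ p.2 ≤ n) := ⟨_, rfl⟩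
  have e1 : R + N' = N := by rw [hR, hN']; exact Multiset.filter_add_not _ _
  obtain ⟨E, hE⟩ : ∃ R, R = N'.filter (fun p => p.1 ≤ n) := ⟨_, rfl⟩
  obtain ⟨S, hS⟩ : ∃ R, R = N'.filter (fun p => ¬ p.1 ≤ n) := ⟨_, rfl⟩
  have e2 : E + S = N' := by rw [hE, hS]; exact Multiset.filter_add_not _ _
  have mR : ∀ p ∈ R, 1 ≤ p.1 ∧ p.1 ≤ p.2 ∧ p.2 ≤ n := by
    intro p hp
    rw [hR, Multiset.mem_filter] at hp
    have := h1 p hp.1; omega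
  have mE : ∀ p ∈ E, 1 ≤ p.1 ∧ p.1 ≤ n ∧ p.2 = n + 1 := by
    intro p hp
    rw [hE, hN', Multiset.mem_filter, Multiset.mem_filter] at hp
    have := h1 p hp.1.1; omega
  have mS : ∀ p ∈ S, p = (n + 1, n + 1) := by
    intro p hp
    rw [hS, hN', Multiset.mem_filter, Multiset.mem_filter] at hp
    have := h1 p hp.1.1
    ext <;> simp only <;> omega
  have hSr : S = Multiset.replicate S.card (n + 1, n + 1) := Multiset.eq_replicate_card.2 mS
  have hNe : N = R + E + S := by rw [← e1, ← e2, add_assoc]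
  clear hR hN' hE hS e1 e2
  subst hNe
  have hcard : E.card + S.card = L (n + 1) := by
    rw [← h2 (n + 1) (by omega) le_rfl, Multiset.countP_add, Multiset.countP_add]
    have a1 : R.countP (fun p => p.1 ≤ n + 1 ∧ n + 1 ≤ p.2) = 0 := by
      rw [Multiset.countP_eq_zero]
      intro p hp
      have := mR p hp; omega
    have a2 : E.countP (fun p => p.1 ≤ n + 1 ∧ n + 1 ≤ p.2) = E.card := by
      rw [Multiset.countP_eq_card]
      intro p hp
      have := mE p hp; omega
    have a3 : S.countP (fun p => p.1 ≤ n + 1 ∧ n + 1 ≤ p.2) = S.card := by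
      rw [Multiset.countP_eq_card]
      intro p hp
      have := mS p hp; subst this; simp
    omega
  refine ⟨R + E.map (fun p => (p.1, n)), E.map (fun p => (p.1, n)), ⟨?_, ?_⟩, ?_, ?_⟩
  · intro p hp
    rw [Multiset.mem_add, Multiset.mem_map] at hp
    rcases hp with hp | ⟨q, hq, rfl⟩
    · exact mR p hp
    · have := mE q hq; simp only; omega
  · intro t ht htn
    rw [← h2 t ht (by omega), Multiset.countP_add, Multiset.countP_add, Multiset.countP_add,
      Multiset.countP_map, ← Multiset.countP_eq_card_filter]
    have a2 : E.countP (fun p => (p.1, n).1 ≤ t ∧ t ≤ (p.1, n).2)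
          = E.countP (fun p => p.1 ≤ t ∧ t ≤ p.2) := by
      apply Multiset.countP_congr rfl
      intro p hp
      have := mE p hp; simp only [eq_iff_iff]; omega
    have a3 : S.countP (fun p => p.1 ≤ t ∧ t ≤ p.2) = 0 := by
      rw [Multiset.countP_eq_zero]
      intro p hp
      rw [mS p hp]; simp only; omega
    rw [a2, a3, add_zero]
  · rw [mem_Us]
    constructor
    · unfold F
      rw [Multiset.le_filter]
      refine ⟨Multiset.le_add_left _ _, ?_⟩
      intro p hp
      rw [Multiset.mem_map] at hp
      obtain ⟨q, _, rfl⟩ := hp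
      rfl
    · simp; omega
  · rw [build_eq]
    have : (E.map (fun p => (p.1, n))).map (fun p => (p.1, n + 1)) = E := by
      rw [Multiset.map_map]
      conv_rhs => rw [← Multiset.map_id E]
      apply Multiset.map_congr rfl
      intro p hp
      have := mE p hp
      ext <;> simp [this]
    rw [this, Multiset.card_map, show L (n + 1) - E.card = S.card by omega, ← hSr]

lemma mem_D {L : ℕ → ℕ} {n : ℕ} {M : Multiset (ℕ × ℕ)} : M ∈ D L n ↔ Valid L n M := by
  induction n generalizing M with
  | zero =>
    simp only [D, Finset.mem_singleton]
    constructor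
    · rintro rfl
      exact ⟨by simp, fun t h1 h2 => by omega⟩
    · rintro ⟨h, _⟩
      apply Multiset.eq_zero_of_forall_notMem
      intro p hp
      have := h p hp; omega
  | succ n ih =>
    simp only [D, Finset.mem_image, Finset.mem_sigma]
    constructor
    · rintro ⟨⟨A, U⟩, ⟨hA, hU⟩, rfl⟩
      exact valid_build (ih.1 hA) hU
    · intro h
      obtain ⟨A, U, hA, hU, e⟩ := exists_build h
      exact ⟨⟨A, U⟩, ⟨ih.2 hA, hU⟩, e⟩

lemma build_recover {L : ℕ → ℕ} {n : ℕ} {M U : Multiset (ℕ × ℕ)} (hM : Valid L n M)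
    (hU : U ∈ Us L n M) :
    ((build L n M U).filter (fun p => p.2 = n + 1 ∧ p.1 ≤ n)).map (fun p => (p.1, n)) = U ∧
    (build L n M U).filter (fun p => p.2 ≤ n) + U = M := by
  rw [mem_Us] at hU
  obtain ⟨hU, hc⟩ := hU
  obtain ⟨R, rfl, hUn⟩ := split_of_le hU
  rw [build_eq]
  have h1 := hM.1
  constructor
  · rw [Multiset.filter_add, Multiset.filter_add]
    rw [(Multiset.filter_eq_nil (s := R)).2, zero_add]
    · rw [(Multiset.filter_eq_nil (s := Multiset.replicate _ _)).2, add_zero]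
      · rw [Multiset.filter_eq_self.2, Multiset.map_map]
        · conv_rhs => rw [← Multiset.map_id U]
          apply Multiset.map_congr rfl
          intro p hp
          have := hUn p hp
          ext <;> simp [this]
        · intro p hp
          rw [Multiset.mem_map] at hp
          obtain ⟨q, hq, rfl⟩ := hp
          have := h1 q (by simp [hq])
          exact ⟨rfl, this.2.1.trans this.2.2⟩
      · intro p hp
        rw [Multiset.eq_of_mem_replicate hp]; simp
    · intro p hp
      have := h1 p (by simp [hp]); omega
  · congr 1
    rw [Multiset.filter_add, Multiset.filter_add]
    rw [(Multiset.filter_eq_self (s := R)).2, (Multiset.filter_eq_nil (s := Multiset.replicate _ _)).2,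
      Multiset.filter_eq_nil.2, add_zero, add_zero]
    · intro p hp
      rw [Multiset.mem_map] at hp
      obtain ⟨q, hq, rfl⟩ := hp
      simp
    · intro p hp
      rw [Multiset.eq_of_mem_replicate hp]; simp
    · intro p hp
      have := h1 p (by simp [hp]); omega

lemma sum_D_succ (L : ℕ → ℕ) (n : ℕ) (g : Multiset (ℕ × ℕ) → ℤ[X]) :
    ∑ N ∈ D L (n + 1), g N = ∑ M ∈ D L n, ∑ U ∈ Us L n M, g (build L n M U) := by
  rw [D, Finset.sum_image, Finset.sum_sigma]
  rintro ⟨A, U⟩ h ⟨B, V⟩ h' e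
  simp only [Finset.coe_sigma, Set.mem_sigma_iff, Finset.mem_coe] at h h' e
  obtain ⟨a1, a2⟩ := build_recover (mem_D.1 h.1) h.2
  obtain ⟨b1, b2⟩ := build_recover (mem_D.1 h'.1) h'.2
  rw [e, b1] at a1
  subst a1
  rw [e, b2] at a2
  subst a2
  rfl

lemma card_build {L : ℕ → ℕ} {n : ℕ} {M U : Multiset (ℕ × ℕ)} (hU : U ∈ Us L n M) :
    (build L n M U).card = M.card + (L (n + 1) - U.card) := by
  rw [mem_Us] at hU
  obtain ⟨R, rfl, hUn⟩ := split_of_le hU.1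
  rw [build_eq]; simp

lemma F_build {L : ℕ → ℕ} {n : ℕ} {M U : Multiset (ℕ × ℕ)} (hM : Valid L n M)
    (hU : U ∈ Us L n M) :
    F (n + 1) (build L n M U) = U.map (fun p => (p.1, n + 1)) +
      Multiset.replicate (L (n + 1) - U.card) (n + 1, n + 1) := by
  rw [mem_Us] at hU
  obtain ⟨R, rfl, hUn⟩ := split_of_le hU.1
  rw [build_eq, F, Multiset.filter_add, Multiset.filter_add]
  rw [(Multiset.filter_eq_nil (s := R)).2, Multiset.filter_eq_self.2,
    Multiset.filter_eq_self.2, zero_add]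
  · intro p hp
    rw [Multiset.eq_of_mem_replicate hp]
  · intro p hp
    rw [Multiset.mem_map] at hp
    obtain ⟨q, hq, rfl⟩ := hp
    rfl
  · intro p hp
    have := hM.1 p (by simp [hp]); omega

lemma card_F {L : ℕ → ℕ} {n : ℕ} {M : Multiset (ℕ × ℕ)} (hM : Valid L n M) (hn : 1 ≤ n) :
    (F n M).card = L n := by
  rw [← hM.2 n hn le_rfl, F, ← Multiset.countP_eq_card_filter]
  apply Multiset.countP_congr rfl
  intro p hp
  have := hM.1 p hp
  simp only [eq_iff_iff]; omega

/-- when the next coordinate is `1` -/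
lemma Us_one {L : ℕ → ℕ} {n : ℕ} {M : Multiset (ℕ × ℕ)} (h : L (n + 1) = 1) :
    Us L n M = insert 0 ((F n M).toFinset.image (fun a => ({a} : Multiset (ℕ × ℕ)))) := by
  ext U
  rw [mem_Us, h]
  simp only [Finset.mem_insert, Finset.mem_image, Multiset.mem_toFinset]
  constructor
  · rintro ⟨h1, h2⟩
    rcases Nat.le_one_iff_eq_zero_or_eq_one.1 h2 with h2 | h2
    · left; exact Multiset.card_eq_zero.1 h2
    · right
      obtain ⟨a, rfl⟩ := Multiset.card_eq_one.1 h2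
      exact ⟨a, Multiset.singleton_le.1 h1, rfl⟩
  · rintro (rfl | ⟨a, ha, rfl⟩)
    · simp
    · exact ⟨Multiset.singleton_le.2 ha, by simp⟩

lemma sum_Us_one {L : ℕ → ℕ} {n : ℕ} {M : Multiset (ℕ × ℕ)} (h : L (n + 1) = 1) :
    ∑ U ∈ Us L n M, (X : ℤ[X]) ^ (build L n M U).card =
      X ^ M.card * (X + ((F n M).toFinset.card : ℤ[X])) := by
  rw [Finset.sum_congr rfl (fun U hU => by rw [card_build hU]), Us_one h, Finset.sum_insert,
    Finset.sum_image]
  · simp [h]; ring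
  · intro a _ b _ e; simpa using e
  · simp

/-- when the current coordinate is `1` -/
lemma Us_cur_one {L : ℕ → ℕ} {n : ℕ} {M : Multiset (ℕ × ℕ)} (hM : Valid L n M) (hn : 1 ≤ n)
    (h : L n = 1) (h' : 1 ≤ L (n + 1)) :
    ∃ a : ℕ × ℕ, a ∈ M ∧ Us L n M = {0, {a}} := by
  have h1 := card_F hM hn
  rw [h] at h1
  obtain ⟨a, ha⟩ := Multiset.card_eq_one.1 h1
  refine ⟨a, ?_, ?_⟩
  · have : a ∈ F n M := by simp [ha]
    exact (Multiset.mem_filter.1 this).1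
  · ext U
    rw [mem_Us, ha]
    simp only [Multiset.le_singleton, Finset.mem_insert, Finset.mem_singleton]
    constructor
    · exact fun h => h.1
    · rintro (rfl | rfl)
      · simp
      · simpa using h'

/-- generating polynomial -/
noncomputable def P (L : ℕ → ℕ) (n : ℕ) : ℤ[X] := ∑ M ∈ D L n, X ^ M.card

lemma P_one {L : ℕ → ℕ} (h : L 1 = 1) : P L 1 = X := by
  rw [P, sum_D_succ, Finset.sum_congr rfl (fun M _ => sum_Us_one h)]
  simp [D, F]

lemma P_step {L : ℕ → ℕ} {n : ℕ} (hn : 1 ≤ n) (h : L n = 1) (h' : L (n + 1) = 1) :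
    P L (n + 1) = (1 + X) * P L n := by
  rw [P, P, sum_D_succ, Finset.mul_sum]
  apply Finset.sum_congr rfl
  intro M hM
  rw [sum_Us_one h']
  have h1 := card_F (mem_D.1 hM) hn
  rw [h] at h1
  obtain ⟨a, ha⟩ := Multiset.card_eq_one.1 h1
  rw [ha]; simp; ring

lemma P_step2 {L : ℕ → ℕ} {n c : ℕ} (hn : 1 ≤ n) (h : L n = 1) (hc : 1 ≤ c)
    (h1 : L (n + 1) = 1 + c) (h2 : L (n + 2) = 1) :
    P L (n + 2) = X ^ c * (2 + 2 * X + X ^ 2) * P L n := by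
  rw [P, P, sum_D_succ, Finset.sum_congr rfl (fun M _ => sum_Us_one h2), sum_D_succ,
    Finset.mul_sum]
  apply Finset.sum_congr rfl
  intro M hM
  have hV := mem_D.1 hM
  obtain ⟨a, ha, hUs⟩ := Us_cur_one hV hn h (by omega)
  have m0 : (0 : Multiset (ℕ × ℕ)) ∈ Us L n M := by rw [hUs]; simp
  have m1 : ({a} : Multiset (ℕ × ℕ)) ∈ Us L n M := by rw [hUs]; simp
  have hne : (a.1, n + 1) ≠ (n + 1, n + 1) := by
    have := hV.1 a ha
    intro e
    have := congrArg Prod.fst e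
    simp only at this; omega
  have r1 : ∀ k : ℕ, k ≠ 0 → (Multiset.replicate k (n + 1, n + 1)).toFinset = {(n + 1, n + 1)} :=
    fun k hk => by
      ext p
      simp [hk]
  have k0 : (F (n + 1) (build L n M 0)).toFinset.card = 1 := by
    rw [F_build hV m0, Multiset.map_zero, zero_add, r1 _ (by simp; omega)]; simp
  have k1 : (F (n + 1) (build L n M {a})).toFinset.card = 2 := by
    rw [F_build hV m1, Multiset.toFinset_add, r1 _ (by simp; omega)]
    rw [Multiset.map_singleton, Multiset.toFinset_singleton]
    exact Finset.card_pair hne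
  rw [hUs, Finset.sum_pair (by simp), k0, k1, card_build m0, card_build m1, h1]
  simp only [Multiset.card_zero, Multiset.card_singleton, Nat.add_sub_cancel_left, Nat.sub_zero]
  push_cast
  ring

lemma P_formula (I : Finset ℕ) (c : ℕ → ℕ) (hI : ∀ i ∈ I, 1 < i)
    (hnc : ∀ i ∈ I, ∀ j ∈ I, i < j → i + 2 ≤ j) (hc : ∀ i ∈ I, 1 ≤ c i) (n : ℕ) :
    1 ≤ n → n ∉ I → ∃ e, e + 2 * (I.filter (· < n)).card = n - 1 ∧
      P (fun t => if t ∈ I then 1 + c t else 1) n =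
        X ^ (∑ i ∈ I.filter (· < n), c i + 1) * (1 + X) ^ e *
          (2 + 2 * X + X ^ 2) ^ (I.filter (· < n)).card := by
  induction n using Nat.strong_induction_on with
  | _ n ih =>
  intro hn hnI
  obtain ⟨n, rfl⟩ : ∃ k, n = k + 1 := ⟨n - 1, by omega⟩
  have h1I : (1 : ℕ) ∉ I := fun h => by have := hI 1 h; omega
  by_cases hn0 : n = 0
  · subst hn0
    have : I.filter (· < 0 + 1) = ∅ := by
      rw [Finset.filter_eq_empty_iff]
      intro i hi; have := hI i hi; omega
    rw [this]
    refine ⟨0, by simp, ?_⟩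
    rw [zero_add, P_one (by simp [h1I])]; simp
  by_cases hnI' : n ∈ I
  · have := hI n hnI'
    obtain ⟨k, rfl⟩ : ∃ k, n = k + 1 := ⟨n - 1, by omega⟩
    have hk : k ∉ I := fun h => by have := hnc k h _ hnI' (by omega); omega
    obtain ⟨e, he, hP⟩ := ih k (by omega) (by omega) hk
    have hf : I.filter (· < k + 1 + 1) = insert (k + 1) (I.filter (· < k)) := by
      ext i
      simp only [Finset.mem_filter, Finset.mem_insert]
      constructor
      · rintro ⟨hi, hi'⟩
        by_cases h : i = k + 1
        · exact Or.inl h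
        · have : i ≠ k := fun h => hk (h ▸ hi)
          exact Or.inr ⟨hi, by omega⟩
      · rintro (rfl | ⟨hi, hi'⟩)
        · exact ⟨hnI', by omega⟩
        · exact ⟨hi, by omega⟩
    have hnm : k + 1 ∉ I.filter (· < k) := by simp
    refine ⟨e, ?_, ?_⟩
    · rw [hf, Finset.card_insert_of_notMem hnm]; omega
    · rw [P_step2 (c := c (k + 1)) (by omega) (by simp [hk]) (hc _ hnI') (by simp [hnI'])
        (by simp only [show k + 2 = k + 1 + 1 by rfl, hnI, if_false]), hP, hf,
        Finset.card_insert_of_notMem hnm, Finset.sum_insert hnm]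
      ring
  · obtain ⟨e, he, hP⟩ := ih n (by omega) (by omega) hnI'
    have hf : I.filter (· < n + 1) = I.filter (· < n) := by
      apply Finset.filter_congr
      intro i hi
      have : i ≠ n := fun h => hnI' (h ▸ hi)
      omega
    refine ⟨e + 1, ?_, ?_⟩
    · rw [hf]; omega
    · rw [P_step (by omega) (by simp [hnI']) (by simp [hnI]), hP, hf]
      ring

/-- the interval vector -/
def vec (r : ℕ) (p : ℕ × ℕ) : Fin r → ℕ :=
  fun t => if p.1 ≤ t.val + 1 ∧ t.val + 1 ≤ p.2 then 1 else 0

lemma vec_inj {r : ℕ} {p q : ℕ × ℕ} (hp : 1 ≤ p.1 ∧ p.1 ≤ p.2 ∧ p.2 ≤ r)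
    (hq : 1 ≤ q.1 ∧ q.1 ≤ q.2 ∧ q.2 ≤ r) (h : vec r p = vec r q) : p = q := by
  have key : ∀ t, 1 ≤ t → t ≤ r → ((p.1 ≤ t ∧ t ≤ p.2) ↔ (q.1 ≤ t ∧ t ≤ q.2)) := by
    intro t h1 h2
    have := congrFun h ⟨t - 1, by omega⟩
    simp only [vec, Nat.sub_add_cancel h1] at this
    split_ifs at this <;> omega
  have a := key p.1 (by omega) (by omega)
  have b := key p.2 (by omega) (by omega)
  have c := key q.1 (by omega) (by omega)
  have d := key q.2 (by omega) (by omega)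
  ext <;> omega

lemma sum_map_vec (r : ℕ) (M : Multiset (ℕ × ℕ)) (t : Fin r) :
    (M.map (vec r)).sum t = M.countP (fun p => p.1 ≤ t.val + 1 ∧ t.val + 1 ≤ p.2) := by
  induction M using Multiset.induction_on with
  | empty => simp
  | cons a M ih =>
    rw [Multiset.map_cons, Multiset.sum_cons, Pi.add_apply, ih, Multiset.countP_cons, vec, add_comm]

lemma map_inj {r : ℕ} {M N : Multiset (ℕ × ℕ)}
    (hM : ∀ p ∈ M, 1 ≤ p.1 ∧ p.1 ≤ p.2 ∧ p.2 ≤ r) (hN : ∀ p ∈ N, 1 ≤ p.1 ∧ p.1 ≤ p.2 ∧ p.2 ≤ r)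
    (h : M.map (vec r) = N.map (vec r)) : M = N := by
  classical
  ext p
  by_cases hp : 1 ≤ p.1 ∧ p.1 ≤ p.2 ∧ p.2 ≤ r
  · have : ∀ K : Multiset (ℕ × ℕ), (∀ p ∈ K, 1 ≤ p.1 ∧ p.1 ≤ p.2 ∧ p.2 ≤ r) →
        K.count p = (K.map (vec r)).count (vec r p) := by
      intro K hK
      rw [Multiset.count, Multiset.count, Multiset.countP_map, ← Multiset.countP_eq_card_filter]
      apply Multiset.countP_congr rfl
      intro q hq
      simp only [eq_iff_iff]
      exact ⟨fun h => by rw [h], fun h => vec_inj hp (hK q hq) h⟩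
    rw [this M hM, this N hN, h]
  · rw [Multiset.count_eq_zero_of_notMem (fun h => hp (hM p h)),
      Multiset.count_eq_zero_of_notMem (fun h => hp (hN p h))]

lemma NC_eq (r k : ℕ) (hr : 5 ≤ r) (L : ℕ → ℕ) (hL : L (r - 1) = 1) (lam : Fin r → ℕ)
    (hlam : ∀ t, lam t = L (t.val + 1)) :
    NC r k lam = ((D L r).filter (fun M => M.card = k)).card := by
  classical
  have hset : {m : (Fin r → ℕ) →₀ ℕ |
    (∀ v ∈ m.support, isPosRootC r v) ∧
    (m.sum fun _ n => n) = k ∧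
    (m.sum fun v n => n • v) = lam} =
      Set.image (fun M : Multiset (ℕ × ℕ) => Multiset.toFinsupp (M.map (vec r)))
        ((D L r).filter (fun M => M.card = k) : Set (Multiset (ℕ × ℕ))) := by
    ext m
    obtain ⟨W, rfl⟩ := Multiset.toFinsupp.surjective m
    have c1 : ((Multiset.toFinsupp W).sum fun _ n => n) = W.card := by
      conv_rhs => rw [← Multiset.toFinsupp_toMultiset W]
      rw [Finsupp.card_toMultiset]; rfl
    have c2 : ((Multiset.toFinsupp W).sum fun v n => n • v) = W.sum := by
      conv_rhs => rw [← Multiset.toFinsupp_toMultiset W]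
      rw [Finsupp.sum_toMultiset]
    simp only [Set.mem_ofPred_eq, c1, c2, Multiset.toFinsupp_support, Multiset.mem_toFinset,
      Set.mem_image, Finset.mem_coe, Finset.mem_filter, mem_D,
      EmbeddingLike.apply_eq_iff_eq]
    constructor
    · rintro ⟨h1, h2, h3⟩
      have h4 : ∀ v ∈ W, ∃ p : ℕ × ℕ, (1 ≤ p.1 ∧ p.1 ≤ p.2 ∧ p.2 ≤ r) ∧ vec r p = v := by
        intro v hv
        have hle : v ⟨r - 2, by omega⟩ ≤ 1 := by
          have h5 : v ≤ W.sum := Multiset.le_sum_of_mem hv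
          have h6 := h5 ⟨r - 2, by omega⟩
          rw [h3, hlam] at h6
          simp only [show r - 2 + 1 = r - 1 by omega, hL] at h6
          exact h6
        rcases h1 v hv with ⟨i, j, a, b, d, rfl⟩ | ⟨i, j, a, b, d, rfl⟩ | rfl
        · exact ⟨(i, j), ⟨a, b, d⟩, rfl⟩
        · exfalso
          simp only at hle
          rw [if_neg (by omega), if_pos (by omega)] at hle
          omega
        · exfalso
          simp only at hle
          rw [if_pos (by omega)] at hle
          omega
      choose! f hf hf' using h4
      have hW : (W.map f).map (vec r) = W := by
        rw [Multiset.map_map]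
        conv_rhs => rw [← Multiset.map_id W]
        exact Multiset.map_congr rfl (fun v hv => by simpa using hf' v hv)
      refine ⟨W.map f, ⟨⟨?_, ?_⟩, by simpa using h2⟩, hW⟩
      · intro p hp
        obtain ⟨v, hv, rfl⟩ := Multiset.mem_map.1 hp
        exact hf v hv
      · intro t ht htr
        have := sum_map_vec r (W.map f) ⟨t - 1, by omega⟩
        rw [hW, h3, hlam] at this
        simp only [Nat.sub_add_cancel ht] at this
        exact this.symm
    · rintro ⟨M, ⟨⟨h1, h2⟩, h3⟩, rfl⟩
      refine ⟨?_, by simpa using h3, ?_⟩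
      · intro v hv
        obtain ⟨p, hp, rfl⟩ := Multiset.mem_map.1 hv
        have := h1 p hp
        exact Or.inl ⟨p.1, p.2, this.1, this.2.1, this.2.2, rfl⟩
      · ext t
        rw [sum_map_vec, hlam, h2 _ (by omega) (by omega)]
  rw [NC, hset, Set.ncard_image_of_injOn, Set.ncard_coe_finset]
  intro M hM N hN e
  simp only [Finset.mem_coe, Finset.mem_filter, mem_D, EmbeddingLike.apply_eq_iff_eq] at hM hN e
  exact map_inj hM.1.1 hN.1.1 e

end KC

/-- Proposition 3.4 (type C): for `λ = Σ α_i + Σ_j c_{i_j} α_{i_j}` with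
`I = {i_1 < ⋯ < i_ℓ}` nonconsecutive, `1 < i_1`, `i_ℓ < r−2`, and positive
coefficients `c`, `℘_q(λ) = q^{m+1} (1+q)^{r−1−2ℓ} (2+2q+q²)^ℓ`. -/
theorem qAnalog_nonconsecutive_typeC (r ℓ : ℕ) (hr : 5 ≤ r)
    (I : Finset ℕ) (hcard : I.card = ℓ)
    (hI : ∀ i ∈ I, 1 < i ∧ i < r - 2)
    (hnc : ∀ i ∈ I, ∀ j ∈ I, i < j → i + 2 ≤ j)
    (c : ℕ → ℕ) (hc : ∀ i ∈ I, 1 ≤ c i)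
    (m : ℕ) (hm : m = ∑ i ∈ I, c i)
    (lam : Fin r → ℕ)
    (hlam : lam = fun t => if t.val + 1 ∈ I then 1 + c (t.val + 1) else 1) :
    ∀ k : ℕ, (NC r k lam : ℤ) =
      ((X : ℤ[X]) ^ (m + 1) * (1 + X) ^ (r - 1 - 2 * ℓ) *
        (2 + 2 * X + X ^ 2) ^ ℓ).coeff k := by
  intro k
  obtain ⟨e, he, hP⟩ := KC.P_formula I c (fun i hi => (hI i hi).1) hnc hc r (by omega)
    (fun h => by have := hI r h; omega)
  have hf : I.filter (· < r) = I := by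
    rw [Finset.filter_eq_self]
    intro i hi; have := hI i hi; omega
  rw [hf, hcard] at he
  rw [hf, hcard, ← hm] at hP
  have he' : r - 1 - 2 * ℓ = e := by omega
  rw [he', ← hP, KC.NC_eq r k hr (fun t => if t ∈ I then 1 + c t else 1)
    (by
      have : r - 1 ∉ I := fun h => by have := hI _ h; omega
      simp [this]) lam (fun t => by rw [hlam]), KC.P, Polynomial.finset_sum_coeff]
  simp only [Polynomial.coeff_X_pow, Finset.card_filter, eq_comm (a := k)]
  push_cast
  rfl
end

section
/- Let r ≥ 5, let ℓ ≥ 0, and let I = {i_1 < i_2 < ⋯ < i_ℓ} be a set of nonconsecutive integers with 1 < i_1 and i_ℓ < r−2 (so i_{j+1} ≥ i_j + 2 for all j), and let c_{i_1},…,c_{i_ℓ} be positive integers. Let λ ∈ ℕ^r have i_j-th coordinate 1 + c_{i_j} for each j and all other coordinates 1. Then the total number of decompositions of λ as a sum of positive roots of A_r satisfies Σ_{k≥0} N_k(λ) = 2^{r−1−2ℓ}·5^ℓ (that is, 2^{r−1}·(5/4)^ℓ). -/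
open Polynomial

namespace KostantCount

/-- Columns of total at most `N` lying below `s`. -/
noncomputable def G (s : ℕ →₀ ℕ) (N : ℕ) : Finset (ℕ →₀ ℕ) :=
  (Finset.Iic s).filter (fun S => S.degree ≤ N)

/-- Extend an array by one more column. -/
noncomputable def ext (L : ℕ → ℕ) (n : ℕ) (a : ℕ → ℕ →₀ ℕ) (S : ℕ →₀ ℕ) : ℕ → ℕ →₀ ℕ :=
  Function.update a (n + 1) (S + Finsupp.single (n + 1) (L (n + 1) - S.degree))

open Classical in
/-- Arrays with `n` columns. -/
noncomputable def F (L : ℕ → ℕ) : ℕ → Finset (ℕ → ℕ →₀ ℕ)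
  | 0 => {0}
  | n + 1 => ((F L n).sigma (fun a => G (a n) (L (n + 1)))).image (fun p => ext L n p.1 p.2)

/-- Explicit description of arrays. -/
def IsArr (L : ℕ → ℕ) (n : ℕ) (a : ℕ → ℕ →₀ ℕ) : Prop :=
  a 0 = 0 ∧ (∀ t, n < t → a t = 0) ∧
    ∀ t, t < n → (a (t + 1)).degree = L (t + 1) ∧ ∀ i, i ≠ t + 1 → a (t + 1) i ≤ a t i

lemma IsArr.supp {L : ℕ → ℕ} {n : ℕ} {a : ℕ → ℕ →₀ ℕ} (h : IsArr L n a) (t i : ℕ)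
    (hi : i = 0 ∨ t < i) : a t i = 0 := by
  obtain ⟨h0, h1, h2⟩ := h
  induction t with
  | zero => simp [h0]
  | succ t ih =>
    by_cases ht : t < n
    · have := (h2 t ht).2 i (by omega)
      have := ih (by omega)
      omega
    · rw [h1 (t + 1) (by omega)]; rfl

lemma mem_F (L : ℕ → ℕ) (n : ℕ) (a : ℕ → ℕ →₀ ℕ) : a ∈ F L n ↔ IsArr L n a := by
  induction n generalizing a with
  | zero =>
    simp only [F, Finset.mem_singleton, IsArr]
    constructor
    · rintro rfl; simp
    · rintro ⟨h0, h1, -⟩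
      funext t
      rcases Nat.eq_zero_or_pos t with rfl | h
      · exact h0
      · exact h1 t h
  | succ n ih =>
    simp only [F, Finset.mem_image, Finset.mem_sigma, Sigma.exists]
    constructor
    · rintro ⟨b, S, ⟨hb, hS⟩, rfl⟩
      rw [ih] at hb
      simp only [G, Finset.mem_filter, Finset.mem_Iic] at hS
      obtain ⟨h0, h1, h2⟩ := hb
      refine ⟨?_, ?_, ?_⟩
      · simp [ext, h0]
      · intro t ht
        rw [ext, Function.update_of_ne (by omega)]
        exact h1 t (by omega)
      · intro t ht
        rcases Nat.lt_succ_iff_lt_or_eq.mp ht with h | rfl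
        · rw [ext, Function.update_of_ne (by omega), Function.update_of_ne (by omega)]
          exact h2 t h
        · rw [ext, Function.update_self, Function.update_of_ne (by omega)]
          refine ⟨?_, ?_⟩
          · rw [map_add, Finsupp.degree_single]; omega
          · intro i hi
            simpa [Finsupp.single_apply, hi.symm] using hS.1 i
    · intro h
      have hs := h.supp
      obtain ⟨h0, h1, h2⟩ := h
      refine ⟨Function.update a (n + 1) 0, (a (n + 1)).erase (n + 1), ⟨?_, ?_⟩, ?_⟩
      · rw [ih]
        refine ⟨?_, ?_, ?_⟩
        · simp [h0]
        · intro t ht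
          by_cases h : t = n + 1
          · simp [h]
          · rw [Function.update_of_ne h]; exact h1 t (by omega)
        · intro t ht
          rw [Function.update_of_ne (by omega), Function.update_of_ne (by omega)]
          exact h2 t (by omega)
      · simp only [G, Finset.mem_filter, Finset.mem_Iic]
        rw [Function.update_of_ne (by omega)]
        refine ⟨?_, ?_⟩
        · intro i
          by_cases hi : i = n + 1
          · simp [hi]
          · rw [Finsupp.erase_ne hi]; exact (h2 n (by omega)).2 i hi
        · rw [← (h2 n (by omega)).1]
          conv_rhs => rw [← Finsupp.single_add_erase (n + 1) (a (n + 1)), map_add]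
          omega
      · rw [ext, Function.update_idem]
        have : L (n + 1) - ((a (n + 1)).erase (n + 1)).degree = a (n + 1) (n + 1) := by
          rw [← (h2 n (by omega)).1]
          conv_lhs =>
            enter [1]
            rw [← Finsupp.single_add_erase (n + 1) (a (n + 1)), map_add, Finsupp.degree_single]
          omega
        rw [this, Finsupp.erase_add_single, Function.update_eq_self]

lemma sum_F_succ (L : ℕ → ℕ) (n : ℕ) (f : (ℕ → ℕ →₀ ℕ) → ℕ) :
    ∑ b ∈ F L (n + 1), f b = ∑ a ∈ F L n, ∑ S ∈ G (a n) (L (n + 1)), f (ext L n a S) := by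
  classical
  rw [F, Finset.sum_image, Finset.sum_sigma]
  rintro ⟨a, S⟩ h ⟨b, T⟩ h' he
  simp only [Finset.coe_sigma, Set.mem_sigma_iff, Finset.mem_coe, mem_F, G, Finset.mem_filter,
    Finset.mem_Iic] at h h'
  simp only [ext] at he
  have e1 : a = b := by
    funext t
    by_cases ht : t = n + 1
    · rw [ht, h.1.2.1 _ (by omega), h'.1.2.1 _ (by omega)]
    · have := congrFun he t
      rwa [Function.update_of_ne ht, Function.update_of_ne ht] at this
  subst e1
  have e2 : S = T := by
    ext i
    have hh := congrFun he (n + 1)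
    rw [Function.update_self, Function.update_self] at hh
    have hi := DFunLike.congr_fun hh i
    by_cases hin : i = n + 1
    · have z := h.1.supp n i (by omega)
      have z1 := h.2.1 i
      have z2 := h'.2.1 i
      omega
    · simpa [Finsupp.single_apply, Ne.symm hin] using hi
  rw [e2]

lemma deg_one (S : ℕ →₀ ℕ) : S.degree = 1 ↔ ∃ i, Finsupp.single i 1 = S := by
  constructor
  · intro h
    have hne : S ≠ 0 := by rintro rfl; simp at h
    obtain ⟨i, hi⟩ := Finsupp.ne_iff.mp hne
    refine ⟨i, ?_⟩
    rw [Finsupp.zero_apply] at hi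
    have e := Finsupp.single_add_erase i S
    rw [← e, map_add, Finsupp.degree_single] at h
    have h1 : S i = 1 := by omega
    have h2 : (S.erase i).degree = 0 := by omega
    rw [Finsupp.degree_eq_zero_iff] at h2
    rw [h2, h1, add_zero] at e
    exact e
  · rintro ⟨i, rfl⟩; simp

lemma card_G_one (s : ℕ →₀ ℕ) : (G s 1).card = 1 + s.support.card := by
  classical
  have : G s 1 = insert 0 (s.support.image (fun i => Finsupp.single i 1)) := by
    ext S
    simp only [G, Finset.mem_filter, Finset.mem_Iic, Finset.mem_insert, Finset.mem_image,
      Finsupp.mem_support_iff]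
    constructor
    · rintro ⟨h1, h2⟩
      rcases Nat.le_one_iff_eq_zero_or_eq_one.mp h2 with h | h
      · left; exact (Finsupp.degree_eq_zero_iff S).mp h
      · right
        obtain ⟨i, rfl⟩ := (deg_one S).mp h
        refine ⟨i, ?_, rfl⟩
        have := h1 i
        rw [Finsupp.single_eq_same] at this
        omega
    · rintro (rfl | ⟨i, hi, rfl⟩)
      · simp
      · simp [Nat.one_le_iff_ne_zero, hi]
  rw [this, Finset.card_insert_of_notMem, Finset.card_image_of_injective, add_comm]
  · intro i j h
    exact Finsupp.single_left_injective one_ne_zero h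
  · simp

lemma G_single (k N : ℕ) (hN : 1 ≤ N) :
    G (Finsupp.single k 1) N = {0, Finsupp.single k 1} := by
  ext S
  simp only [G, Finset.mem_filter, Finset.mem_Iic, Finset.mem_insert, Finset.mem_singleton]
  constructor
  · rintro ⟨h1, -⟩
    have h0 : ∀ i, i ≠ k → S i = 0 := by
      intro i hi
      have := h1 i
      rw [Finsupp.single_eq_of_ne hi] at this
      omega
    have hk := h1 k
    rw [Finsupp.single_eq_same] at hk
    rcases Nat.le_one_iff_eq_zero_or_eq_one.mp hk with h | h
    · left; ext i
      by_cases hi : i = k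
      · simp [hi, h]
      · simp [h0 i hi]
    · right; ext i
      by_cases hi : i = k
      · simp [hi, h]
      · simp [h0 i hi, Finsupp.single_eq_of_ne hi]
  · rintro (rfl | rfl) <;> simp [hN]

lemma col_single {L : ℕ → ℕ} {n : ℕ} {a : ℕ → ℕ →₀ ℕ} (h : IsArr L n a) (hn : 1 ≤ n)
    (hL : L n = 1) : ∃ k, k ≤ n ∧ a n = Finsupp.single k 1 := by
  have h1 := (h.2.2 (n - 1) (by omega)).1
  rw [Nat.sub_add_cancel hn, hL] at h1
  obtain ⟨k, hk⟩ := (deg_one _).mp h1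
  refine ⟨k, ?_, hk.symm⟩
  by_contra hlt
  have := h.supp n k (by omega)
  rw [← hk] at this
  simp at this

lemma card_F_one (L : ℕ → ℕ) (h : L 1 = 1) : (F L 1).card = 1 := by
  rw [Finset.card_eq_sum_ones, sum_F_succ]
  simp [F, h, card_G_one]

lemma card_F_step (L : ℕ → ℕ) (n : ℕ) (h : L (n + 1) = 1) :
    (F L (n + 1)).card = ∑ a ∈ F L n, (1 + (a n).support.card) := by
  rw [Finset.card_eq_sum_ones, sum_F_succ]
  simp only [← Finset.card_eq_sum_ones, h, card_G_one]

lemma card_F_two (L : ℕ → ℕ) (n : ℕ) (hn : 1 ≤ n) (h0 : L n = 1) (h : L (n + 1) = 1) :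
    (F L (n + 1)).card = (F L n).card * 2 := by
  rw [card_F_step L n h, Finset.sum_const_nat]
  intro a ha
  rw [mem_F] at ha
  obtain ⟨k, -, hk⟩ := col_single ha hn h0
  rw [hk, Finsupp.support_single _ one_ne_zero]
  simp

lemma card_F_five (L : ℕ → ℕ) (n : ℕ) (hn : 1 ≤ n) (h0 : L n = 1) (h1 : 2 ≤ L (n + 1))
    (h2 : L (n + 2) = 1) : (F L (n + 2)).card = (F L n).card * 5 := by
  rw [card_F_step L (n + 1) h2, sum_F_succ, Finset.sum_const_nat]
  intro a ha
  rw [mem_F] at ha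
  obtain ⟨k, hkn, hk⟩ := col_single ha hn h0
  rw [hk, G_single k _ (by omega), Finset.sum_pair (by
    intro h; have := DFunLike.congr_fun h k; simp at this)]
  simp only [ext, Function.update_self, Finsupp.degree_single, map_zero, zero_add, Nat.sub_zero]
  rw [Finsupp.support_single _ (by omega)]
  have : (Finsupp.single k 1 + Finsupp.single (n + 1) (L (n + 1) - 1)).support = {k, n + 1} := by
    ext i
    simp only [Finsupp.mem_support_iff, Finsupp.add_apply, Finsupp.single_apply,
      Finset.mem_insert, Finset.mem_singleton]
    split_ifs <;> omega
  rw [this, Finset.card_pair (by omega), Finset.card_singleton]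

lemma card_F (L : ℕ → ℕ) (I : Finset ℕ) (hI : ∀ i ∈ I, 2 ≤ i) (hL1 : ∀ i, i ∉ I → L i = 1)
    (hL2 : ∀ i ∈ I, 2 ≤ L i) (hnc : ∀ i ∈ I, i + 1 ∉ I) (n : ℕ) :
    1 ≤ n → n ∉ I → 2 * (I.filter (· ≤ n)).card ≤ n - 1 ∧
      (F L n).card = 2 ^ (n - 1 - 2 * (I.filter (· ≤ n)).card) * 5 ^ (I.filter (· ≤ n)).card := by
  induction n using Nat.strong_induction_on with
  | _ n ih =>
  intro hn hnI
  have hdrop : I.filter (· ≤ n) = I.filter (· ≤ n - 1) := by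
    ext i
    simp only [Finset.mem_filter]
    constructor
    · rintro ⟨h, h'⟩
      have : i ≠ n := by rintro rfl; exact hnI h
      exact ⟨h, by omega⟩
    · rintro ⟨h, h'⟩; exact ⟨h, by omega⟩
  rcases Nat.eq_or_lt_of_le hn with rfl | hn2
  · have : I.filter (· ≤ 1) = ∅ := by
      ext i
      simp only [Finset.mem_filter, Finset.notMem_empty, iff_false, not_and]
      intro h; have := hI i h; omega
    rw [this, card_F_one L (hL1 1 hnI)]; simp
  · obtain ⟨m, rfl⟩ : ∃ m, n = m + 2 := ⟨n - 2, by omega⟩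
    rw [hdrop]
    simp only [show m + 2 - 1 = m + 1 by omega]
    by_cases hm : m + 1 ∈ I
    · have hm1 : 1 ≤ m := by have := hI _ hm; omega
      have hmI : m ∉ I := fun h => hnc m h hm
      obtain ⟨e1, e2⟩ := ih m (by omega) hm1 hmI
      have hins : I.filter (· ≤ m + 1) = insert (m + 1) (I.filter (· ≤ m)) := by
        ext i
        simp only [Finset.mem_filter, Finset.mem_insert]
        constructor
        · rintro ⟨h, h'⟩
          by_cases i = m + 1
          · left; assumption
          · right; exact ⟨h, by omega⟩
        · rintro (rfl | ⟨h, h'⟩)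
          · exact ⟨hm, le_rfl⟩
          · exact ⟨h, by omega⟩
      rw [hins, Finset.card_insert_of_notMem (by simp),
        card_F_five L m hm1 (hL1 _ hmI) (hL2 _ hm) (hL1 _ hnI), e2]
      refine ⟨by omega, ?_⟩
      rw [show m + 1 - 2 * ((I.filter (· ≤ m)).card + 1) = m - 1 - 2 * (I.filter (· ≤ m)).card by
        omega]
      ring
    · obtain ⟨e1, e2⟩ := ih (m + 1) (by omega) (by omega) hm
      rw [card_F_two L (m + 1) (by omega) (hL1 _ hm) (hL1 _ hnI), e2]
      refine ⟨by omega, ?_⟩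
      rw [show m + 1 - 2 * (I.filter (· ≤ m + 1)).card =
        (m + 1 - 1 - 2 * (I.filter (· ≤ m + 1)).card) + 1 by omega]
      ring

/-- The root `α[i,j]`. -/
def al (r i j : ℕ) : Fin r → ℕ :=
  fun t => if i ≤ t.val + 1 ∧ t.val + 1 ≤ j then 1 else 0

/-- Index set of the positive roots. -/
def P (r : ℕ) : Finset (ℕ × ℕ) :=
  (Finset.Icc 1 r ×ˢ Finset.Icc 1 r).filter (fun p => p.1 ≤ p.2)

lemma mem_P (r : ℕ) (p : ℕ × ℕ) : p ∈ P r ↔ 1 ≤ p.1 ∧ p.1 ≤ p.2 ∧ p.2 ≤ r := by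
  simp only [P, Finset.mem_filter, Finset.mem_product, Finset.mem_Icc]
  omega

lemma al_inj {r : ℕ} {p q : ℕ × ℕ} (hp : p ∈ P r) (hq : q ∈ P r)
    (h : al r p.1 p.2 = al r q.1 q.2) : p = q := by
  rw [mem_P] at hp hq
  have key : ∀ t, 1 ≤ t → t ≤ r → ((p.1 ≤ t ∧ t ≤ p.2) ↔ (q.1 ≤ t ∧ t ≤ q.2)) := by
    intro t h1 h2
    have := congrFun h ⟨t - 1, by omega⟩
    simp only [al, Nat.sub_add_cancel h1] at this
    split_ifs at this <;> first | omega | tauto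
  have k1 := key p.1 (by omega) (by omega)
  have k2 := key p.2 (by omega) (by omega)
  have k3 := key q.1 (by omega) (by omega)
  have k4 := key q.2 (by omega) (by omega)
  ext <;> omega

lemma isPosRoot_iff (r : ℕ) (v : Fin r → ℕ) :
    isPosRootA r v ↔ ∃ p ∈ P r, al r p.1 p.2 = v := by
  constructor
  · rintro ⟨i, j, h1, h2, h3, rfl⟩
    exact ⟨(i, j), by rw [mem_P]; exact ⟨h1, h2, h3⟩, rfl⟩
  · rintro ⟨p, hp, rfl⟩
    rw [mem_P] at hp
    exact ⟨p.1, p.2, hp.1, hp.2.1, hp.2.2, rfl⟩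

/-- Build a finitely supported function from multiplicities. -/
noncomputable def mk (r : ℕ) (f : ℕ → ℕ → ℕ) : (Fin r → ℕ) →₀ ℕ :=
  ∑ p ∈ P r, Finsupp.single (al r p.1 p.2) (f p.1 p.2)

lemma mk_apply (r : ℕ) (f : ℕ → ℕ → ℕ) (p : ℕ × ℕ) (hp : p ∈ P r) :
    mk r f (al r p.1 p.2) = f p.1 p.2 := by
  rw [mk, Finsupp.finsetSum_apply, Finset.sum_eq_single p]
  · simp
  · intro q hq hne
    rw [Finsupp.single_apply, if_neg]
    intro h
    exact hne (al_inj hq hp h)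
  · intro h; exact absurd hp h

lemma mk_supp (r : ℕ) (f : ℕ → ℕ → ℕ) (v : Fin r → ℕ) (hv : v ∈ (mk r f).support) :
    isPosRootA r v := by
  rw [isPosRoot_iff]
  by_contra hcon
  push Not at hcon
  rw [Finsupp.mem_support_iff] at hv
  apply hv
  rw [mk, Finsupp.finsetSum_apply, Finset.sum_eq_zero]
  intro p hp
  rw [Finsupp.single_apply, if_neg (hcon p hp)]

lemma eq_mk (r : ℕ) (m : (Fin r → ℕ) →₀ ℕ) (h : ∀ v ∈ m.support, isPosRootA r v) :
    m = mk r (fun i j => m (al r i j)) := by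
  ext v
  by_cases hv : isPosRootA r v
  · obtain ⟨p, hp, rfl⟩ := (isPosRoot_iff r v).mp hv
    rw [mk_apply r _ p hp]
  · have h1 : m v = 0 := by
      by_contra hne; exact hv (h v (Finsupp.mem_support_iff.mpr hne))
    have h2 : mk r (fun i j => m (al r i j)) v = 0 := by
      by_contra hne; exact hv (mk_supp r _ v (Finsupp.mem_support_iff.mpr hne))
    rw [h1, h2]

lemma mk_weight (r : ℕ) (f : ℕ → ℕ → ℕ) (t : Fin r) :
    ((mk r f).sum fun v n => n • v) t =
      ∑ i ∈ Finset.Icc 1 (t.val + 1), ∑ j ∈ Finset.Icc (t.val + 1) r, f i j := by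
  have : ((mk r f).sum fun v n => n • v) = ∑ p ∈ P r, f p.1 p.2 • al r p.1 p.2 := by
    rw [mk, ← Finsupp.sum_finsetSum_index]
    · refine Finset.sum_congr rfl fun p _ => ?_
      rw [Finsupp.sum_single_index]; simp
    · simp
    · intro a b c; exact add_smul b c a
  rw [this, Finset.sum_apply, ← Finset.sum_product']
  have hsub : Finset.Icc 1 (t.val + 1) ×ˢ Finset.Icc (t.val + 1) r =
      (P r).filter (fun p => p.1 ≤ t.val + 1 ∧ t.val + 1 ≤ p.2) := by
    ext p
    simp only [Finset.mem_filter, mem_P, Finset.mem_product, Finset.mem_Icc]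
    omega
  rw [hsub, Finset.sum_filter]
  refine Finset.sum_congr rfl fun p _ => ?_
  simp [al]

lemma telescope (g : ℕ → ℕ) (t d : ℕ) (h : ∀ j, t ≤ j → g (j + 1) ≤ g j)
    (h0 : g (t + d) = 0) : ∑ j ∈ Finset.Ico t (t + d), (g j - g (j + 1)) = g t := by
  induction d generalizing t with
  | zero => simp at h0; simp [h0]
  | succ d ih =>
    rw [Finset.sum_eq_sum_Ico_succ_bot (by omega)]
    have := ih (t + 1) (fun j hj => h j (by omega)) (by rw [← h0]; congr 1; omega)
    rw [show t + (d + 1) = t + 1 + d by omega, this]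
    have := h t le_rfl
    omega

/-- From arrays to decompositions. -/
noncomputable def toM (r : ℕ) (a : ℕ → ℕ →₀ ℕ) : (Fin r → ℕ) →₀ ℕ :=
  mk r (fun i j => a j i - a (j + 1) i)

lemma arr_telescope {L : ℕ → ℕ} {r : ℕ} {a : ℕ → ℕ →₀ ℕ} (h : IsArr L r a) (i t : ℕ)
    (hit : i ≤ t) (ht : t ≤ r) :
    ∑ j ∈ Finset.Icc t r, (a j i - a (j + 1) i) = a t i := by
  have e : Finset.Icc t r = Finset.Ico t (t + (r + 1 - t)) := by
    ext j; simp only [Finset.mem_Icc, Finset.mem_Ico]; omega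
  rw [e]
  apply telescope (fun j => a j i)
  · intro j hj
    by_cases hjr : j < r
    · exact (h.2.2 j hjr).2 i (by omega)
    · simp [h.2.1 (j + 1) (by omega)]
  · simp [h.2.1 (t + (r + 1 - t)) (by omega)]

lemma arr_degree {L : ℕ → ℕ} {r : ℕ} {a : ℕ → ℕ →₀ ℕ} (h : IsArr L r a) (t : ℕ) :
    ∑ i ∈ Finset.Icc 1 t, a t i = (a t).degree := by
  rw [Finsupp.degree_apply]
  symm
  apply Finset.sum_subset
  · intro i hi
    rw [Finsupp.mem_support_iff] at hi
    rw [Finset.mem_Icc]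
    by_contra hc
    exact hi (h.supp t i (by omega))
  · intro i _ hi
    simpa using hi

/-- All decompositions. -/
def D (r : ℕ) (lam : Fin r → ℕ) : Set ((Fin r → ℕ) →₀ ℕ) :=
  {m | (∀ v ∈ m.support, isPosRootA r v) ∧ (m.sum fun v n => n • v) = lam}

lemma toM_mem {L : ℕ → ℕ} {r : ℕ} {a : ℕ → ℕ →₀ ℕ} (h : IsArr L r a) :
    toM r a ∈ D r (fun t => L (t.val + 1)) := by
  refine ⟨mk_supp r _, ?_⟩
  funext t
  have ht := t.isLt
  rw [toM, mk_weight, ← (h.2.2 t.val ht).1, ← arr_degree h]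
  refine Finset.sum_congr rfl fun i hi => ?_
  rw [Finset.mem_Icc] at hi
  exact arr_telescope h i (t.val + 1) hi.2 (by omega)

lemma toM_inj {L : ℕ → ℕ} {r : ℕ} {a b : ℕ → ℕ →₀ ℕ} (ha : IsArr L r a) (hb : IsArr L r b)
    (h : toM r a = toM r b) : a = b := by
  funext t
  ext i
  by_cases hit : i = 0 ∨ t < i
  · rw [ha.supp t i hit, hb.supp t i hit]
  by_cases ht : r < t
  · rw [ha.2.1 t ht, hb.2.1 t ht]
  rw [← arr_telescope ha i t (by omega) (by omega), ← arr_telescope hb i t (by omega) (by omega)]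
  refine Finset.sum_congr rfl fun j hj => ?_
  rw [Finset.mem_Icc] at hj
  have hp : (i, j) ∈ P r := by rw [mem_P]; dsimp only; omega
  have := DFunLike.congr_fun h (al r i j)
  rw [toM, toM, mk_apply r _ (i, j) hp, mk_apply r _ (i, j) hp] at this
  exact this

/-- From decompositions to arrays. -/
noncomputable def toA (r : ℕ) (m : (Fin r → ℕ) →₀ ℕ) (t : ℕ) : ℕ →₀ ℕ :=
  ∑ i ∈ Finset.Icc 1 t, Finsupp.single i (∑ j ∈ Finset.Icc t r, m (al r i j))

lemma toA_apply (r : ℕ) (m : (Fin r → ℕ) →₀ ℕ) (t i : ℕ) :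
    toA r m t i = if 1 ≤ i ∧ i ≤ t then ∑ j ∈ Finset.Icc t r, m (al r i j) else 0 := by
  rw [toA, Finsupp.finsetSum_apply]
  simp only [Finsupp.single_apply, Finset.sum_ite_eq', Finset.mem_Icc]

lemma toA_isArr {L : ℕ → ℕ} {r : ℕ} {m : (Fin r → ℕ) →₀ ℕ}
    (hm : m ∈ D r (fun t => L (t.val + 1))) : IsArr L r (toA r m) := by
  obtain ⟨h1, h2⟩ := hm
  refine ⟨by simp [toA], ?_, ?_⟩
  · intro t ht
    ext i
    rw [toA_apply, Finset.Icc_eq_empty (by omega)]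
    simp
  · intro t ht
    refine ⟨?_, ?_⟩
    · have := congrFun h2 ⟨t, ht⟩
      rw [eq_mk r m h1, mk_weight] at this
      rw [toA, map_sum]
      simpa using this
    · intro i hi
      rw [toA_apply, toA_apply]
      by_cases hh : 1 ≤ i ∧ i ≤ t
      · rw [if_pos hh, if_pos (by omega)]
        exact Finset.sum_le_sum_of_subset (Finset.Icc_subset_Icc_left (by omega))
      · rw [if_neg (by omega)]; omega

lemma toM_toA {r : ℕ} {m : (Fin r → ℕ) →₀ ℕ} (h : ∀ v ∈ m.support, isPosRootA r v) :
    toM r (toA r m) = m := by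
  conv_rhs => rw [eq_mk r m h]
  rw [toM, mk, mk]
  refine Finset.sum_congr rfl fun p hp => ?_
  rw [mem_P] at hp
  congr 1
  rw [toA_apply, toA_apply, if_pos (by omega), if_pos (by omega),
    ← Finset.add_sum_Ioc_eq_sum_Icc hp.2.2]
  have : Finset.Icc (p.2 + 1) r = Finset.Ioc p.2 r := by
    ext j; simp only [Finset.mem_Icc, Finset.mem_Ioc]; omega
  rw [this]
  omega

open Classical in
lemma D_eq (L : ℕ → ℕ) (r : ℕ) :
    D r (fun t => L (t.val + 1)) = ((F L r).image (toM r) : Finset _) := by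
  ext m
  simp only [Finset.coe_image, Set.mem_image, Finset.mem_coe, mem_F]
  constructor
  · intro hm
    exact ⟨toA r m, toA_isArr hm, toM_toA hm.1⟩
  · rintro ⟨a, ha, rfl⟩
    exact toM_mem ha

lemma tsum_NA (L : ℕ → ℕ) (r : ℕ) :
    ∑' k : ℕ, NA r k (fun t => L (t.val + 1)) = (F L r).card := by
  classical
  set E := (F L r).image (toM r) with hE
  have hD : D r (fun t => L (t.val + 1)) = (E : Set _) := by rw [D_eq]
  have hcard : E.card = (F L r).card := by
    apply Finset.card_image_of_injOn
    intro a ha b hb h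
    rw [Finset.mem_coe, mem_F] at ha hb
    exact toM_inj ha hb h
  have hNA : ∀ k, NA r k (fun t => L (t.val + 1)) =
      (E.filter (fun m => (m.sum fun _ n => n) = k)).card := by
    intro k
    rw [NA, ← Set.ncard_coe_finset]
    congr 1
    ext m
    rw [Finset.coe_filter, Set.mem_ofPred_eq, Set.mem_ofPred_eq, ← Finset.mem_coe, ← hD, D,
      Set.mem_ofPred_eq]
    tauto
  simp only [hNA]
  rw [← hcard, Finset.card_eq_sum_card_image (fun m => m.sum fun _ n => n) E]
  apply tsum_eq_sum
  intro k hk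
  rw [Finset.card_eq_zero, Finset.filter_eq_empty_iff]
  intro m hm he
  exact hk (Finset.mem_image.mpr ⟨m, hm, he⟩)

end KostantCount

/-- Corollary 3.5: for `λ = Σ α_i + Σ_j c_{i_j} α_{i_j}` with `I = {i_1 < ⋯ < i_ℓ}`
nonconsecutive, `1 < i_1`, `i_ℓ < r−2`, and positive coefficients `c`, the total number
of decompositions of `λ` as a sum of positive roots of `A_r` is
`℘(λ) = 2^{r−1−2ℓ}·5^ℓ = 2^{r−1}(5/4)^ℓ`. -/
theorem total_decompositions_nonconsecutive (r ℓ : ℕ) (hr : 5 ≤ r)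
    (I : Finset ℕ) (hcard : I.card = ℓ)
    (hI : ∀ i ∈ I, 1 < i ∧ i < r - 2)
    (hnc : ∀ i ∈ I, ∀ j ∈ I, i < j → i + 2 ≤ j)
    (c : ℕ → ℕ) (hc : ∀ i ∈ I, 1 ≤ c i)
    (lam : Fin r → ℕ)
    (hlam : lam = fun t => if t.val + 1 ∈ I then 1 + c (t.val + 1) else 1) :
    ∑' k : ℕ, NA r k lam = 2 ^ (r - 1 - 2 * ℓ) * 5 ^ ℓ := by
  have hlam' : lam = fun t => (fun i => if i ∈ I then 1 + c i else 1) (t.val + 1) := hlam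
  rw [hlam']
  refine (KostantCount.tsum_NA (fun i => if i ∈ I then 1 + c i else 1) r).trans ?_
  have hrI : r ∉ I := fun h => by have := hI r h; omega
  have := (KostantCount.card_F (fun i => if i ∈ I then 1 + c i else 1) I
    (fun i hi => (hI i hi).1) (fun i hi => by simp [hi])
    (fun i hi => by have := hc i hi; simp only [hi, if_true]; omega)
    (fun i hi hi' => by have := hnc i hi (i + 1) hi' (by omega); omega) r (by omega) hrI).2
  rw [Finset.filter_true_of_mem (fun i hi => by have := hI i hi; omega), hcard] at this
  exact this
end

section
/- Fix ℓ ≥ 0 and m ≥ ℓ. For r ≥ 2ℓ+1 and k ∈ ℕ, let N_{r,k} be the coefficient of q^k in the polynomial q^{m+1}·(1+q)^{r−1−2ℓ}·(2+2q+q²)^ℓ ∈ ℤ[q], and set μ_r = (r+1)/2 − ℓ/5 + m and σ_r = √((r−1)/4 + 3ℓ/50). Then for every x ∈ ℝ: lim_{r→∞} (Σ_{k ∈ ℕ, k ≤ μ_r + x·σ_r} N_{r,k}) / (2^{r−1−2ℓ}·5^ℓ) = (1/√(2π))·∫_{−∞}^x e^{−u²/2} du. In other words, the normalized distribution of the number of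 positive roots used in the decompositions converges to the standard Gaussian as r → ∞. -/
open Polynomial Filter

/-- `Nrk ℓ m r k` is the coefficient of `q^k` in `q^{m+1} (1+q)^{r−1−2ℓ} (2+2q+q²)^ℓ`,
i.e. the number of decompositions using exactly `k` positive roots of the weight
`λ = Σ α_i + Σ_j c_{i_j} α_{i_j}` of a classical Lie algebra of rank `r`. -/
noncomputable def Nrk (ℓ m r k : ℕ) : ℤ :=
  ((X : ℤ[X]) ^ (m + 1) * (1 + X) ^ (r - 1 - 2 * ℓ) * (2 + 2 * X + X ^ 2) ^ ℓ).coeff k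

/-- The mean `μ_r = (r+1)/2 − ℓ/5 + m`. -/
noncomputable def muGen (ℓ m r : ℕ) : ℝ := ((r : ℝ) + 1) / 2 - (ℓ : ℝ) / 5 + (m : ℝ)

/-- The standard deviation `σ_r = √((r−1)/4 + 3ℓ/50)`. -/
noncomputable def sigmaGen (ℓ r : ℕ) : ℝ :=
  Real.sqrt (((r : ℝ) - 1) / 4 + 3 * (ℓ : ℝ) / 50)

open MeasureTheory ProbabilityTheory

/-- Natural-number version of the generating polynomial. -/
noncomputable def Qpoly (ℓ m n : ℕ) : ℕ[X] :=
  (X : ℕ[X]) ^ (m + 1) * (1 + X) ^ n * (2 + 2 * X + X ^ 2) ^ ℓ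

lemma Qpoly_map {R : Type*} [CommRing R] (ℓ m n : ℕ) :
    (Qpoly ℓ m n).map (Nat.castRingHom R) =
      (X : R[X]) ^ (m + 1) * (1 + X) ^ n * (2 + 2 * X + X ^ 2) ^ ℓ := by
  simp [Qpoly, Polynomial.map_ofNat]

lemma Nrk_eq (ℓ m n k : ℕ) :
    Nrk ℓ m (n + (2 * ℓ + 1)) k = ((Qpoly ℓ m n).coeff k : ℤ) := by
  unfold Nrk
  rw [show n + (2 * ℓ + 1) - 1 - 2 * ℓ = n by omega, ← Qpoly_map, Polynomial.coeff_map]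
  simp

lemma Qpoly_sum {R : Type*} [CommRing R] (ℓ m n : ℕ) (q : R) :
    ∑ k ∈ Finset.range ((Qpoly ℓ m n).natDegree + 1), ((Qpoly ℓ m n).coeff k : R) * q ^ k =
      q ^ (m + 1) * (1 + q) ^ n * (2 + 2 * q + q ^ 2) ^ ℓ := by
  have h := Polynomial.eval₂_eq_sum_range (p := Qpoly ℓ m n) (Nat.castRingHom R) q
  simp only [eq_natCast] at h
  rw [← h, Polynomial.eval₂_eq_eval_map, Qpoly_map]
  simp

/-- The normalized law. -/
noncomputable def lawQ (ℓ m n : ℕ) : Measure ℝ :=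
  ∑ k ∈ Finset.range ((Qpoly ℓ m n).natDegree + 1),
    ENNReal.ofReal (((Qpoly ℓ m n).coeff k : ℝ) / ((2 : ℝ) ^ n * 5 ^ ℓ)) •
      Measure.dirac (((k : ℝ) - muGen ℓ m (n + (2 * ℓ + 1))) / sigmaGen ℓ (n + (2 * ℓ + 1)))

lemma lawQ_apply (ℓ m n : ℕ) (s : Set ℝ) [DecidablePred (· ∈ s)] (hs : MeasurableSet s) :
    lawQ ℓ m n s = ENNReal.ofReal
      (∑ k ∈ Finset.range ((Qpoly ℓ m n).natDegree + 1),
        if (((k : ℝ) - muGen ℓ m (n + (2 * ℓ + 1))) / sigmaGen ℓ (n + (2 * ℓ + 1))) ∈ s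
        then ((Qpoly ℓ m n).coeff k : ℝ) / ((2 : ℝ) ^ n * 5 ^ ℓ) else 0) := by
  rw [ENNReal.ofReal_sum_of_nonneg]
  · simp only [lawQ, Measure.coe_finsetSum, Finset.sum_apply, Measure.smul_apply,
      Measure.dirac_apply' _ hs, smul_eq_mul]
    refine Finset.sum_congr rfl fun k _ => ?_
    split_ifs with h <;> simp [h]
  · intro k _
    split_ifs <;> positivity

instance lawQ_prob (ℓ m n : ℕ) : IsProbabilityMeasure (lawQ ℓ m n) := by
  classical
  constructor
  rw [lawQ_apply _ _ _ _ MeasurableSet.univ]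
  simp only [Set.mem_univ, if_true]
  have h := Qpoly_sum (R := ℝ) ℓ m n 1
  simp only [one_pow, mul_one] at h
  rw [← Finset.sum_div, h]
  norm_num

lemma lawQ_charFun (ℓ m n : ℕ) (t : ℝ) :
    charFun (lawQ ℓ m n) t =
      (Complex.cos ((t / sigmaGen ℓ (n + (2 * ℓ + 1)) / 2 : ℝ))) ^ n *
      (Complex.exp (((t / sigmaGen ℓ (n + (2 * ℓ + 1)) : ℝ) : ℂ) * (-(4 * ℓ / 5)) * Complex.I) *
        ((2 + 2 * Complex.exp ((t / sigmaGen ℓ (n + (2 * ℓ + 1)) : ℝ) * Complex.I) +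
          Complex.exp ((t / sigmaGen ℓ (n + (2 * ℓ + 1)) : ℝ) * Complex.I) ^ 2) / 5) ^ ℓ) := by
  set s := sigmaGen ℓ (n + (2 * ℓ + 1)) with hs
  have hc : (n : ℝ) / 2 + (1 + 4 * ℓ / 5 + m) = muGen ℓ m (n + (2 * ℓ + 1)) := by
    unfold muGen; push_cast; ring
  rw [charFun_apply_real, lawQ, integral_finsetSum_measure]
  · simp only [integral_smul_measure, integral_dirac, ← hs, ← hc]
    set θ := t / s with hθ
    set q := Complex.exp ((θ : ℝ) * Complex.I) with hq
    have hterm : ∀ k : ℕ, (ENNReal.ofReal (((Qpoly ℓ m n).coeff k : ℝ) /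
        ((2 : ℝ) ^ n * 5 ^ ℓ))).toReal • Complex.exp (t *
          (((k - ((n : ℝ) / 2 + (1 + 4 * ℓ / 5 + m))) / s : ℝ) : ℂ) * Complex.I) =
        (((Qpoly ℓ m n).coeff k : ℂ) * q ^ k) *
          (Complex.exp (-(θ * (n / 2 + (1 + 4 * ℓ / 5 + m)) * Complex.I)) / (2 ^ n * 5 ^ ℓ)) := by
      intro k
      rw [ENNReal.toReal_ofReal (by positivity), Complex.real_smul, hq, ← Complex.exp_nat_mul]
      have : Complex.exp (t *
          (((k - ((n : ℝ) / 2 + (1 + 4 * ℓ / 5 + m))) / s : ℝ) : ℂ) * Complex.I) =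
          Complex.exp (k * (θ * Complex.I)) *
            Complex.exp (-(θ * (n / 2 + (1 + 4 * ℓ / 5 + m)) * Complex.I)) := by
        rw [← Complex.exp_add, hθ]; congr 1; push_cast; ring
      rw [this]; push_cast; ring
    rw [Finset.sum_congr rfl fun k _ => hterm k, ← Finset.sum_mul, Qpoly_sum]
    have h2 : Complex.exp (-(θ * (n / 2 + (1 + 4 * ℓ / 5 + m)) * Complex.I)) =
        Complex.exp (-(θ / 2 * Complex.I)) ^ n * (Complex.exp (θ * (-(4 * ℓ / 5)) * Complex.I) *
          Complex.exp (-(θ * Complex.I)) ^ (m + 1)) := by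
      rw [← Complex.exp_nat_mul, ← Complex.exp_nat_mul, ← Complex.exp_add, ← Complex.exp_add]
      congr 1; push_cast; ring
    have h3 : Complex.cos ((θ / 2 : ℝ)) = (1 + q) * Complex.exp (-(θ / 2 * Complex.I)) / 2 := by
      rw [Complex.cos, hq, add_mul, ← Complex.exp_add, one_mul, add_comm]
      congr 2
      · congr 1; push_cast; ring
      · congr 1; push_cast; ring
    have h4 : q ^ (m + 1) * Complex.exp (-(θ * Complex.I)) ^ (m + 1) = 1 := by
      rw [← mul_pow, hq, ← Complex.exp_add]; simp
    rw [h2, h3, div_pow, div_pow, mul_pow]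
    linear_combination ((1 + q) ^ n * (2 + 2 * q + q ^ 2) ^ ℓ *
      Complex.exp (-(θ / 2 * Complex.I)) ^ n * Complex.exp (θ * (-(4 * ℓ / 5)) * Complex.I) /
        (2 ^ n * 5 ^ ℓ)) * h4
  · intro k _
    refine Integrable.smul_measure ?_ ENNReal.ofReal_ne_top
    exact integrable_dirac (by simp)

lemma sigma_sq (ℓ n : ℕ) :
    sigmaGen ℓ (n + (2 * ℓ + 1)) = Real.sqrt ((n : ℝ) / 4 + (ℓ / 2 + 3 * ℓ / 50)) := by
  unfold sigmaGen; congr 1; push_cast; ring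

lemma sigma_tendsto (ℓ : ℕ) :
    Tendsto (fun n : ℕ => sigmaGen ℓ (n + (2 * ℓ + 1))) atTop atTop := by
  simp only [sigma_sq]
  refine Real.tendsto_sqrt_atTop.comp (tendsto_atTop_add_const_right _ _ ?_)
  exact tendsto_natCast_atTop_atTop.atTop_div_const (by norm_num)

lemma n_div_sigma (ℓ : ℕ) :
    Tendsto (fun n : ℕ => (n : ℝ) / sigmaGen ℓ (n + (2 * ℓ + 1)) ^ 2) atTop (nhds 4) := by
  set c : ℝ := (ℓ / 2 + 3 * ℓ / 50) with hc
  have hc0 : 0 ≤ c := by positivity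
  have h : Tendsto (fun n : ℕ => 4 - 4 * c / sigmaGen ℓ (n + (2 * ℓ + 1)) ^ 2) atTop
      (nhds (4 - 0)) := by
    refine tendsto_const_nhds.sub (Tendsto.const_div_atTop ?_ _)
    exact (tendsto_pow_atTop two_ne_zero).comp (sigma_tendsto ℓ)
  rw [sub_zero] at h
  refine h.congr' ?_
  filter_upwards [eventually_gt_atTop 0] with n hn
  have : (0 : ℝ) < n := by exact_mod_cast hn
  rw [sigma_sq, ← hc, Real.sq_sqrt (by positivity)]
  field_simp
  ring

lemma cos_pow_tendsto (ℓ : ℕ) (t : ℝ) :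
    Tendsto (fun n : ℕ => (Real.cos (t / sigmaGen ℓ (n + (2 * ℓ + 1)) / 2)) ^ n) atTop
      (nhds (Real.exp (-(t ^ 2 / 2)))) := by
  have hθ : Tendsto (fun n : ℕ => t / sigmaGen ℓ (n + (2 * ℓ + 1)) / 4) atTop (nhds 0) := by
    simpa using ((sigma_tendsto ℓ).const_div_atTop t).div_const 4
  have hsinc := (Real.continuous_sinc.tendsto 0).comp hθ
  rw [Real.sinc_zero] at hsinc
  have key : Tendsto (fun n : ℕ => (n : ℝ) *
      (Real.cos (t / sigmaGen ℓ (n + (2 * ℓ + 1)) / 2) - 1)) atTop (nhds (-(t ^ 2 / 2))) := by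
    have h := ((n_div_sigma ℓ).mul_const (-(t ^ 2 / 8))).mul (hsinc.pow 2)
    convert h using 2 with n
    · simp only [Function.comp]
      set θ := t / sigmaGen ℓ (n + (2 * ℓ + 1)) / 4 with hθd
      have e1 : t / sigmaGen ℓ (n + (2 * ℓ + 1)) / 2 = 2 * θ := by rw [hθd]; ring
      have e2 : Real.sin θ = θ * Real.sinc θ := by
        by_cases h0 : θ = 0
        · simp [h0]
        · rw [Real.sinc_of_ne_zero h0]; field_simp
      have e3 : (n : ℝ) / sigmaGen ℓ (n + (2 * ℓ + 1)) ^ 2 * (-(t ^ 2 / 8)) =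
          n * (-2 * θ ^ 2) := by rw [hθd]; ring
      rw [e1, e3, Real.cos_two_mul, Real.cos_sq', e2]; ring
    · ring
  have := Real.tendsto_one_add_pow_exp_of_tendsto key
  simpa using this

/-- `lawQ` as a bundled probability measure. -/
noncomputable def lawP (ℓ m n : ℕ) : ProbabilityMeasure ℝ := ⟨lawQ ℓ m n, lawQ_prob ℓ m n⟩

/-- The standard Gaussian as a bundled probability measure. -/
noncomputable def gaussP : ProbabilityMeasure ℝ := ⟨gaussianReal 0 1, inferInstance⟩

lemma coe_lawP (ℓ m n : ℕ) : (lawP ℓ m n : Measure ℝ) = lawQ ℓ m n := rfl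

lemma coe_gaussP : (gaussP : Measure ℝ) = gaussianReal 0 1 := rfl

lemma lawQ_tendsto (ℓ m : ℕ) :
    Tendsto (fun n => lawP ℓ m n) atTop (nhds gaussP) := by
  refine ProbabilityMeasure.tendsto_iff_tendsto_charFun.2 fun t => ?_
  simp only [coe_lawP, coe_gaussP, lawQ_charFun, charFun_gaussianReal]
  have hθ : Tendsto (fun n : ℕ => t / sigmaGen ℓ (n + (2 * ℓ + 1))) atTop (nhds 0) :=
    (sigma_tendsto ℓ).const_div_atTop t
  have hG : Continuous (fun θ : ℝ => Complex.exp ((θ : ℂ) * (-(4 * ℓ / 5)) * Complex.I) *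
        ((2 + 2 * Complex.exp ((θ : ℂ) * Complex.I) +
          Complex.exp ((θ : ℂ) * Complex.I) ^ 2) / 5) ^ ℓ) := by fun_prop
  have h1 := (hG.tendsto 0).comp hθ
  have h2 := (Complex.continuous_ofReal.tendsto _).comp (cos_pow_tendsto ℓ t)
  convert h2.mul h1 using 2 with n
  · simp
  · norm_num

lemma gauss_Iic (x : ℝ) : (gaussianReal 0 1 (Set.Iic x)).toReal =
    (1 / Real.sqrt (2 * Real.pi)) * ∫ u in Set.Iic x, Real.exp (-u ^ 2 / 2) := by
  rw [gaussianReal_apply_eq_integral _ one_ne_zero, ENNReal.toReal_ofReal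
    (integral_nonneg fun u => gaussianPDFReal_nonneg _ _ _), ← integral_const_mul]
  simp [gaussianPDFReal]

/-- Theorem 1.1 (Gaussian behavior): the normalized distribution of the number of
positive roots used in the decompositions of `λ` converges to the standard normal
distribution as the rank `r → ∞`. -/
theorem gaussian_limit_nonconsecutive (ℓ m : ℕ) (hm : ℓ ≤ m) (x : ℝ) :
    Tendsto (fun r : ℕ =>
      (∑' k : ℕ, if (k : ℝ) ≤ muGen ℓ m r + x * sigmaGen ℓ r then (Nrk ℓ m r k : ℝ) else 0) /
        ((2 : ℝ) ^ (r - 1 - 2 * ℓ) * 5 ^ ℓ))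
      atTop
      (nhds ((1 / Real.sqrt (2 * Real.pi)) * ∫ u in Set.Iic x, Real.exp (-u ^ 2 / 2))) := by
  classical
  rw [← tendsto_add_atTop_iff_nat (2 * ℓ + 1), ← gauss_Iic]
  have hnull : (gaussianReal 0 1) (frontier (Set.Iic x)) = 0 := by
    have := nullSingletonClass_gaussianReal (μ := 0) (v := 1) one_ne_zero
    simp
  have h := ProbabilityMeasure.tendsto_measure_of_null_frontier_of_tendsto'
    (lawQ_tendsto ℓ m) (E := Set.Iic x) hnull
  have h' := (ENNReal.tendsto_toReal (measure_ne_top (gaussianReal 0 1) (Set.Iic x))).comp h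
  refine h'.congr' ?_
  filter_upwards [(sigma_tendsto ℓ).eventually_gt_atTop 0] with n hn
  simp only [Function.comp, coe_lawP]
  rw [lawQ_apply _ _ _ _ measurableSet_Iic, ENNReal.toReal_ofReal
    (Finset.sum_nonneg fun k _ => by split_ifs <;> positivity)]
  rw [show n + (2 * ℓ + 1) - 1 - 2 * ℓ = n by omega,
    tsum_eq_sum (s := Finset.range ((Qpoly ℓ m n).natDegree + 1)), Finset.sum_div]
  · refine Finset.sum_congr rfl fun k _ => ?_
    have : ((k : ℝ) - muGen ℓ m (n + (2 * ℓ + 1))) / sigmaGen ℓ (n + (2 * ℓ + 1)) ∈ Set.Iic x ↔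
        (k : ℝ) ≤ muGen ℓ m (n + (2 * ℓ + 1)) + x * sigmaGen ℓ (n + (2 * ℓ + 1)) := by
      rw [Set.mem_Iic, div_le_iff₀ hn, sub_le_iff_le_add']
    simp only [this, Nrk_eq]
    split_ifs <;> simp
  · intro k hk
    rw [Nrk_eq, Polynomial.coeff_eq_zero_of_natDegree_lt (by simpa using hk)]
    simp
end
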